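/- Normal-families/compactness property: assume m > 4 and let Ω ⊆ ℝ^m be open. Let (f_j)_{j≥1} be a sequence in C²(Ω×𝔹^m, ℋ_k) with 𝒟_k f_j = 0 in Ω × 𝔹^m for every j (each f_j is then automatically infinitely differentiable in (x,ν)), and suppose that for every compact K ⊂ Ω, sup_j ∫_K ∫_{𝔹^m} |f_j(x,ν)| dν dx < ∞. Then there exist a subsequence (f_{j_k}) and a function f ∈ C²(Ω×𝔹^m, ℋ_k) with 𝒟_k f = 0 in Ω × 𝔹^m such that for every multi-index α ∈ ℕ^m and all compact sets K₁ ⊂ Ω and K₂ ⊂ 𝔹^m, the derivatives D_x^α f_{j_k} converge uniformly to D_x^α f on K₁ × K₂. -/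

import Mathlib

noncomputable section

open MeasureTheory Metric Filter Topology
open scoped RealInnerProductSpace

/-- `ℝ^m` as a Euclidean space. -/
abbrev Evec (m : ℕ) : Type := EuclideanSpace ℝ (Fin m)

/-- Partial derivative in the `i`-th coordinate direction. -/
def pdv {m : ℕ} (i : Fin m) (f : Evec m → ℝ) (x : Evec m) : ℝ :=
  fderiv ℝ f x (EuclideanSpace.single i 1)

/-- Euclidean Laplacian on `ℝ^m`. -/
def lapl {m : ℕ} (f : Evec m → ℝ) (x : Evec m) : ℝ :=
  ∑ i : Fin m, pdv i (pdv i f) x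

/-- `p` is a real-valued polynomial function on `ℝ^m`, homogeneous of degree `k` and
harmonic; i.e. `p ∈ ℋ_k`. -/
def IsHk (m k : ℕ) (p : Evec m → ℝ) : Prop :=
  (∃ P : MvPolynomial (Fin m) ℝ, ∀ x : Evec m, p x = MvPolynomial.eval (fun i => x i) P) ∧
  (∀ (c : ℝ) (x : Evec m), p (c • x) = c ^ k * p x) ∧
  (∀ x : Evec m, lapl p x = 0)

/-- The surface measure `dS` on the unit sphere `𝕊^{m-1}`, as a measure on `ℝ^m`. -/
def sphereM (m : ℕ) : Measure (Evec m) :=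
  Measure.map Subtype.val ((volume : Measure (Evec m)).toSphere)

/-- `ω_m`, the surface area of the unit sphere `𝕊^{m-1}`. -/
def omegaS (m : ℕ) : ℝ := (sphereM m Set.univ).toReal

/-- The constant `c_{m,k} = 2(m+2k-2)/((m-2)ω_m)`. -/
def cmk (m k : ℕ) : ℝ := 2 * ((m : ℝ) + 2 * k - 2) / (((m : ℝ) - 2) * omegaS m)

/-- The reflection `R_a(u) = u - 2⟨a,u⟩a/|a|²` (in Clifford notation `a u a/|a|²`). -/
def reflv {m : ℕ} (a u : Evec m) : Evec m :=
  u - (2 * ⟪a, u⟫ / ‖a‖ ^ 2) • a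

/-- `dim ℋ_k`. -/
def hdim (m k : ℕ) : ℕ :=
  Nat.choose (m + k - 1) (m - 1) - Nat.choose (m + k - 3) (m - 1)

/-- `Z` is the reproducing kernel `Z_k` of `ℋ_k` on the unit sphere: a symmetric,
rotation invariant kernel, bounded by `dim ℋ_k` on the unit ball, belonging to `ℋ_k`
in the first variable and reproducing elements of `ℋ_k` from their spherical values. -/
def IsZk (m k : ℕ) (Z : Evec m → Evec m → ℝ) : Prop :=
  (∀ v : Evec m, IsHk m k (fun u => Z u v)) ∧
  (∀ p : Evec m → ℝ, IsHk m k p → ∀ v : Evec m, (∫ u, Z u v * p u ∂(sphereM m)) = p v) ∧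
  (∀ u v : Evec m, Z u v = Z v u) ∧
  (∀ u v : Evec m, ‖u‖ ≤ 1 → ‖v‖ ≤ 1 → |Z u v| ≤ (hdim m k : ℝ)) ∧
  (∀ (A : Evec m ≃ₗᵢ[ℝ] Evec m) (u v : Evec m), Z (A u) (A v) = Z u v)

/-- The point `(x', y) ∈ ℝ^{d+1}` with first `d` coordinates `x'` and last coordinate `y`. -/
def upP (d : ℕ) (x' : Evec d) (y : ℝ) : Evec (d + 1) :=
  (EuclideanSpace.equiv (Fin (d + 1)) ℝ).symm
    (Fin.snoc (⇑(EuclideanSpace.equiv (Fin d) ℝ) x') y)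

/-- The first `d` coordinates of a point of `ℝ^{d+1}`. -/
def downP (d : ℕ) (x : Evec (d + 1)) : Evec d :=
  (EuclideanSpace.equiv (Fin d) ℝ).symm (fun i => x (Fin.castSucc i))

/-- The last coordinate of a point of `ℝ^{d+1}`. -/
def lastP (d : ℕ) (x : Evec (d + 1)) : ℝ := x (Fin.last d)

/-- The Poisson kernel `P_H` for bosonic Laplacians in the upper half-space `ℝ^{d+1}_+`,
`P_H(x,t,u,v) = c_{m,k} (y/|x-t|^m) Z_k(R_{x-t}(u), v)` with `m = d+1`, `x = (x',y)`,
`t = (t',0)`. -/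
def PH (d k : ℕ) (Z : Evec (d + 1) → Evec (d + 1) → ℝ) (x' : Evec d) (y : ℝ)
    (t' : Evec d) (u v : Evec (d + 1)) : ℝ :=
  cmk (d + 1) k * (y / ‖upP d x' y - upP d t' 0‖ ^ (d + 1)) *
    Z (reflv (upP d x' y - upP d t' 0) u) v

/-- The Poisson integral `P_H[f]` in the upper half-space. -/
def PHint (d k : ℕ) (Z : Evec (d + 1) → Evec (d + 1) → ℝ)
    (f : Evec d → Evec (d + 1) → ℝ) (x' : Evec d) (y : ℝ) (v : Evec (d + 1)) : ℝ :=
  ∫ t' : Evec d, (∫ u, PH d k Z x' y t' u v * f t' u ∂(sphereM (d + 1)))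

/-- The Poisson kernel `P_B` for bosonic Laplacians in the unit ball. -/
def PB (m k : ℕ) (Z : Evec m → Evec m → ℝ) (x ζ ω ν : Evec m) : ℝ :=
  (cmk m k / 2) * ((1 - ‖x‖ ^ 2) / ‖x - ζ‖ ^ m) * Z (reflv (x - ζ) ω) ν

/-- The Poisson integral `P_B[h]` in the unit ball. -/
def PBint (m k : ℕ) (Z : Evec m → Evec m → ℝ) (h : Evec m → Evec m → ℝ)
    (x ν : Evec m) : ℝ :=
  ∫ ζ, (∫ ω, PB m k Z x ζ ω ν * h ζ ω ∂(sphereM m)) ∂(sphereM m)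

/-- Partial derivative in the first (`x`) variable. -/
def pd1 {m : ℕ} (i : Fin m) (f : Evec m → Evec m → ℝ) : Evec m → Evec m → ℝ :=
  fun x u => fderiv ℝ (fun x₁ => f x₁ u) x (EuclideanSpace.single i 1)

/-- Partial derivative in the second (`u`) variable. -/
def pd2 {m : ℕ} (i : Fin m) (f : Evec m → Evec m → ℝ) : Evec m → Evec m → ℝ :=
  fun x u => fderiv ℝ (fun u₁ => f x u₁) u (EuclideanSpace.single i 1)

/-- The bosonic Laplacian `𝒟_k`. -/
def Dk (m k : ℕ) (f : Evec m → Evec m → ℝ) : Evec m → Evec m → ℝ := fun x u =>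
  (∑ i : Fin m, pd1 i (pd1 i f) x u)
    - (4 / ((m : ℝ) + 2 * k - 2)) *
        ∑ i : Fin m, ∑ j : Fin m, u i * pd1 i (pd2 j (pd1 j f)) x u
    + (4 * ‖u‖ ^ 2 / (((m : ℝ) + 2 * k - 2) * ((m : ℝ) + 2 * k - 4))) *
        ∑ i : Fin m, ∑ j : Fin m, pd2 i (pd1 i (pd2 j (pd1 j f))) x u

/-- `f ∈ C²(Ω×𝔹^m, ℋ_k)`: twice continuously differentiable on `Ω × 𝔹^m` and, for each
fixed `x ∈ Ω`, coinciding in the second variable with an element of `ℋ_k`. -/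
def C2Hk (m k : ℕ) (Ω : Set (Evec m)) (f : Evec m → Evec m → ℝ) : Prop :=
  ContDiffOn ℝ 2 (fun q : Evec m × Evec m => f q.1 q.2) (Ω ×ˢ ball (0 : Evec m) 1) ∧
  ∀ x ∈ Ω, ∃ q, IsHk m k q ∧ ∀ u ∈ closedBall (0 : Evec m) 1, f x u = q u

/-- The `L^p` norm `(∫_{ℝ^{m-1}} ∫_{𝕊^{m-1}} |f(x',u)|^p dS(u) dx')^{1/p}` (`m = d+1`),
valued in `ℝ≥0∞`. -/
def lpH (d : ℕ) (p : ℝ) (f : Evec d → Evec (d + 1) → ℝ) : ENNReal :=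
  (∫⁻ x' : Evec d, ∫⁻ u, ENNReal.ofReal (|f x' u| ^ p) ∂(sphereM (d + 1))) ^ (1 / p)

/-- `f ∈ L^p(ℝ^{m-1}×𝔹^m, ℋ_k)` (`m = d+1`). -/
def MemLpH (d k : ℕ) (p : ℝ) (f : Evec d → Evec (d + 1) → ℝ) : Prop :=
  Measurable (fun q : Evec d × Evec (d + 1) => f q.1 q.2) ∧
  (∀ x' : Evec d, ∃ q, IsHk (d + 1) k q ∧
    ∀ u ∈ closedBall (0 : Evec (d + 1)) 1, f x' u = q u) ∧
  lpH d p f < ⊤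

/-- The `L^p` norm `(∫_{𝕊^{m-1}} ∫_{𝕊^{m-1}} |h(ζ,ω)|^p dS(ω) dS(ζ))^{1/p}`,
valued in `ℝ≥0∞`. -/
def lpS (m : ℕ) (p : ℝ) (h : Evec m → Evec m → ℝ) : ENNReal :=
  (∫⁻ ζ, ∫⁻ ω, ENNReal.ofReal (|h ζ ω| ^ p) ∂(sphereM m) ∂(sphereM m)) ^ (1 / p)

/-- `h ∈ L^p(𝕊^{m-1}×𝔹^m, ℋ_k)`. -/
def MemLpS (m k : ℕ) (p : ℝ) (h : Evec m → Evec m → ℝ) : Prop :=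
  Measurable (fun q : Evec m × Evec m => h q.1 q.2) ∧
  (∀ ζ : Evec m, ‖ζ‖ = 1 → ∃ q, IsHk m k q ∧
    ∀ ω ∈ closedBall (0 : Evec m) 1, h ζ ω = q ω) ∧
  lpS m p h < ⊤

/-- Iterated partial derivative `D_x^α` in the first variable, for a multi-index `α ∈ ℕ^m`. -/
def Dx {m : ℕ} (α : Fin m → ℕ) (f : Evec m → Evec m → ℝ) : Evec m → Evec m → ℝ :=
  (List.finRange m).foldr (fun i g => (pd1 i)^[α i] g) f

/-- Iterated partial derivative `D_ν^β` in the second variable, for a multi-index `β ∈ ℕ^m`. -/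
def Dv {m : ℕ} (β : Fin m → ℕ) (f : Evec m → Evec m → ℝ) : Evec m → Evec m → ℝ :=
  (List.finRange m).foldr (fun i g => (pd2 i)^[β i] g) f

/-!
Write `div = ⟨∂_u, ∂_x⟩`. The bosonic Laplacians intertwine,
`div ∘ 𝒟_{k+1} = ((m + 2k - 4) / (m + 2k)) 𝒟_k ∘ div`, and `div` lowers the degree in `u`, so
induction on `k` shows that a smooth null solution of `𝒟_k` satisfies `Δ_x^{k+1} f = 0`.
The mean of a polyharmonic function against a fixed radial kernel is a polynomial in the square of
the radius, so a suitable combination of dilated kernels is a smooth compactly supported kernel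
whose convolution reproduces every such function; mollification removes the smoothness assumption.
Convolution with a fixed smooth kernel turns the local `L¹` bounds into local uniform bounds and
equicontinuity, so Arzelà–Ascoli applies to the finitely many coefficients of `f_j(x, ·)` in `ℋ_k`,
and the same kernel passes the convergence on to all derivatives.
-/

open ContinuousLinearMap (lsmul)
open scoped ContDiff Convolution

/-- The space of smooth real functions of `(x, u) ∈ ℝ^m × ℝ^m`. -/
def SmoothFn (m : ℕ) : Submodule ℝ (Evec m × Evec m → ℝ) where
  carrier := {g | ContDiff ℝ ∞ g}
  add_mem' {f g} (hf : ContDiff ℝ ∞ f) (hg : ContDiff ℝ ∞ g) := hf.add hg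
  zero_mem' := (contDiff_zero_fun : ContDiff ℝ ∞ fun _ => (0 : ℝ))
  smul_mem' c g (hg : ContDiff ℝ ∞ g) := hg.const_smul c

namespace SmoothFn

variable {m : ℕ}

instance : CoeFun (SmoothFn m) fun _ => Evec m × Evec m → ℝ := ⟨Subtype.val⟩

theorem contDiff (g : SmoothFn m) : ContDiff ℝ ∞ g := g.2

theorem differentiable (g : SmoothFn m) : Differentiable ℝ g :=
  (contDiff g).differentiable (by simp)

/-- The directional derivative `∂_v`, as an operator on smooth functions. -/
def dir (v : Evec m × Evec m) : Module.End ℝ (SmoothFn m) where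
  toFun g := ⟨fun p => fderiv ℝ g p v,
    ((contDiff g).fderiv_right (m := ∞) (by simp)).clm_apply contDiff_const⟩
  map_add' f g := by
    ext p
    simp [fderiv_add (differentiable f p) (differentiable g p)]
  map_smul' c g := by
    ext p
    simp [fderiv_const_smul (differentiable g p)]

theorem dir_apply (v : Evec m × Evec m) (g : SmoothFn m) (p : Evec m × Evec m) :
    dir v g p = fderiv ℝ g p v := rfl

theorem commute_dir (v w : Evec m × Evec m) : Commute (dir v) (dir w) := by
  ext g p
  have second_deriv (v w) : dir v (dir w g) p = fderiv ℝ (fderiv ℝ g) p v w := by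
    have hd : DifferentiableAt ℝ (fderiv ℝ g) p :=
      (((contDiff g).fderiv_right (m := ∞) (by simp)).differentiable (by simp)) p
    change fderiv ℝ (fun p => fderiv ℝ g p w) p v = _
    rw [fderiv_clm_apply hd (differentiableAt_const w)]
    simp
  change dir v (dir w g) p = dir w (dir v g) p
  rw [second_deriv, second_deriv]
  exact ((contDiff g).contDiffAt.isSymmSndFDerivAt (by simpa using ENat.LEInfty.out)).eq v w

/-- Multiplication by the coordinate `u_i`, as an operator on smooth functions. -/
def mulCoord (i : Fin m) : Module.End ℝ (SmoothFn m) where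
  toFun g := ⟨fun p => p.2 i * g p, ContDiff.mul (by fun_prop) (contDiff g)⟩
  map_add' f g := by ext p; simp [mul_add]
  map_smul' c g := by ext p; simp [mul_left_comm]

theorem mulCoord_apply (i : Fin m) (g : SmoothFn m) (p : Evec m × Evec m) :
    mulCoord i g p = p.2 i * g p := rfl

theorem dir_mulCoord (v : Evec m × Evec m) (i : Fin m) (g : SmoothFn m) :
    dir v (mulCoord i g) = mulCoord i (dir v g) + v.2 i • g := by
  ext p
  have hcoord : HasFDerivAt (fun p : Evec m × Evec m => p.2 i)
      ((EuclideanSpace.proj (𝕜 := ℝ) i).comp (ContinuousLinearMap.snd ℝ (Evec m) (Evec m))) p :=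
    ((EuclideanSpace.proj (𝕜 := ℝ) i).comp
      (ContinuousLinearMap.snd ℝ (Evec m) (Evec m))).hasFDerivAt (x := p)
  change fderiv ℝ (fun p : Evec m × Evec m => p.2 i * g p) p v = _
  rw [(hcoord.fun_mul (differentiable g p).hasFDerivAt).fderiv]
  simp [mulCoord_apply, dir_apply, mul_comm]

/-- The partial derivative `∂_{x_i}`. -/
def dx (i : Fin m) : Module.End ℝ (SmoothFn m) := dir (EuclideanSpace.single i 1, 0)

/-- The partial derivative `∂_{u_i}`. -/
def du (i : Fin m) : Module.End ℝ (SmoothFn m) := dir (0, EuclideanSpace.single i 1)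

theorem commute_dx_dx (i j : Fin m) : Commute (dx i) (dx j) := commute_dir _ _

theorem commute_dx_du (i j : Fin m) : Commute (dx i) (du j) := commute_dir _ _

theorem commute_du_du (i j : Fin m) : Commute (du i) (du j) := commute_dir _ _

theorem commute_dx_mulCoord (i j : Fin m) : Commute (dx i) (mulCoord j) :=
  LinearMap.ext fun g => by simp [dx, dir_mulCoord]

theorem du_mul_mulCoord (i j : Fin m) :
    du i * mulCoord j = mulCoord j * du i + if i = j then 1 else 0 := by
  refine LinearMap.ext fun g => ?_
  simp only [du, Module.End.mul_apply, LinearMap.add_apply, dir_mulCoord, PiLp.single_apply,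
    eq_comm (a := i)]
  split_ifs <;> simp

/-- `⟨u, ∂_x⟩`. -/
def dirGrad : Module.End ℝ (SmoothFn m) := ∑ i, mulCoord i * dx i

/-- `⟨∂_u, ∂_x⟩`. -/
def divergence : Module.End ℝ (SmoothFn m) := ∑ i, du i * dx i

/-- Multiplication by `|u|²`. -/
def mulNormSq : Module.End ℝ (SmoothFn m) := ∑ i, mulCoord i * mulCoord i

/-- The Laplacian `Δ_x` in the first variable. -/
def laplX : Module.End ℝ (SmoothFn m) := ∑ i, dx i * dx i

/-- The Euler operator `⟨u, ∂_u⟩`, whose eigenvalues are the degrees of homogeneity in `u`. -/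
def eulerU : Module.End ℝ (SmoothFn m) := ∑ i, mulCoord i * du i

/-- The bosonic Laplacian `𝒟_k`, as an operator on smooth functions. -/
def bosonic (k : ℕ) : Module.End ℝ (SmoothFn m) :=
  laplX - (4 / ((m : ℝ) + 2 * k - 2)) • (dirGrad * divergence)
    + (4 / (((m : ℝ) + 2 * k - 2) * ((m : ℝ) + 2 * k - 4))) •
      (mulNormSq * (divergence * divergence))

theorem commute_laplX_of_forall {A : Module.End ℝ (SmoothFn m)}
    (hA : ∀ i, Commute (dx i) A) : Commute laplX A :=
  Commute.sum_left _ _ _ fun i _ => (hA i).mul_left (hA i)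

theorem commute_laplX_dirGrad : Commute (laplX (m := m)) dirGrad :=
  commute_laplX_of_forall fun i => Commute.sum_right _ _ _ fun j _ =>
    (commute_dx_mulCoord i j).mul_right (commute_dx_dx i j)

theorem commute_laplX_divergence : Commute (laplX (m := m)) divergence :=
  commute_laplX_of_forall fun i => Commute.sum_right _ _ _ fun j _ =>
    (commute_dx_du i j).mul_right (commute_dx_dx i j)

theorem commute_laplX_mulNormSq : Commute (laplX (m := m)) mulNormSq :=
  commute_laplX_of_forall fun i => Commute.sum_right _ _ _ fun j _ =>
    (commute_dx_mulCoord i j).mul_right (commute_dx_mulCoord i j)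

theorem divergence_mul_mulCoord (j : Fin m) :
    divergence * mulCoord j = mulCoord j * divergence + dx j := by
  simp only [divergence, Finset.sum_mul, Finset.mul_sum, mul_assoc,
    (commute_dx_mulCoord _ j).eq]
  simp only [← mul_assoc, du_mul_mulCoord, add_mul, ite_mul, one_mul, zero_mul,
    Finset.sum_add_distrib, Finset.sum_ite_eq', Finset.mem_univ, if_true]

theorem commute_dx_divergence (i : Fin m) : Commute (dx i) divergence :=
  Commute.sum_right _ _ _ fun j _ => (commute_dx_du i j).mul_right (commute_dx_dx i j)

theorem commute_du_divergence (i : Fin m) : Commute (du i) divergence :=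
  Commute.sum_right _ _ _ fun j _ => (commute_du_du i j).mul_right (commute_dx_du j i).symm

theorem divergence_mul_dirGrad :
    divergence * dirGrad = dirGrad * divergence + laplX (m := m) := by
  simp only [dirGrad, laplX, Finset.mul_sum, Finset.sum_mul, ← Finset.sum_add_distrib,
    ← mul_assoc, divergence_mul_mulCoord, add_mul]
  simp only [mul_assoc, (commute_dx_divergence _).eq]

theorem divergence_mul_mulNormSq :
    divergence * mulNormSq = mulNormSq * divergence + (2 : ℝ) • dirGrad (m := m) := by
  simp only [mulNormSq, dirGrad, Finset.mul_sum, Finset.sum_mul, Finset.smul_sum,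
    ← Finset.sum_add_distrib]
  refine Finset.sum_congr rfl fun i _ => ?_
  rw [← mul_assoc, divergence_mul_mulCoord, add_mul, mul_assoc, divergence_mul_mulCoord,
    (commute_dx_mulCoord i i).eq, mul_add, two_smul, ← mul_assoc, add_assoc]

theorem eulerU_mul_divergence_add :
    eulerU * divergence + divergence = divergence * eulerU (m := m) := by
  conv_lhs => enter [2]; rw [divergence]
  simp only [eulerU, Finset.mul_sum, Finset.sum_mul, ← Finset.sum_add_distrib,
    ← mul_assoc, divergence_mul_mulCoord, add_mul, (commute_dx_du _ _).eq]
  simp only [mul_assoc, (commute_du_divergence _).eq]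

theorem eulerU_divergence {k : ℝ} {g : SmoothFn m} (hg : eulerU g = k • g) :
    eulerU (divergence g) = (k - 1) • divergence g := by
  have h := LinearMap.congr_fun eulerU_mul_divergence_add g
  simp only [LinearMap.add_apply, Module.End.mul_apply, hg, map_smul] at h
  rw [eq_sub_of_add_eq h]
  module

theorem bosonic_apply (k : ℕ) (g : SmoothFn m) :
    bosonic k g = laplX g - (4 / ((m : ℝ) + 2 * k - 2)) • dirGrad (divergence g)
      + (4 / (((m : ℝ) + 2 * k - 2) * ((m : ℝ) + 2 * k - 4))) •
        mulNormSq (divergence (divergence g)) := rfl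

-- `hm` says that no denominator of any `𝒟_n` vanishes.
theorem divergence_bosonic_succ (hm : ∀ n : ℕ, m + 2 * n ≠ 4) (k : ℕ) (g : SmoothFn m) :
    divergence (bosonic (k + 1) g) =
      (((m : ℝ) + 2 * k - 4) / ((m : ℝ) + 2 * k)) • bosonic k (divergence g) := by
  have h₄ : (m : ℝ) + 2 * k - 4 ≠ 0 := sub_ne_zero.2 (by exact_mod_cast hm k)
  have h₂ : (m : ℝ) + 2 * k - 2 ≠ 0 := fun h => hm (k + 1) <| by
    exact_mod_cast (by push_cast; linarith : ((m + 2 * (k + 1) : ℕ) : ℝ) = (4 : ℕ))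
  have h₀ : (m : ℝ) + 2 * k ≠ 0 := fun h => hm (k + 2) <| by
    exact_mod_cast (by push_cast; linarith : ((m + 2 * (k + 2) : ℕ) : ℝ) = (4 : ℕ))
  have e₂ : (m : ℝ) + 2 * ((k : ℝ) + 1) - 2 = m + 2 * k := by ring
  have e₄ : (m : ℝ) + 2 * ((k : ℝ) + 1) - 4 = m + 2 * k - 2 := by ring
  have hgrad (g : SmoothFn m) : divergence (dirGrad g) = dirGrad (divergence g) + laplX g :=
    LinearMap.congr_fun divergence_mul_dirGrad g
  have hnorm (g : SmoothFn m) :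
      divergence (mulNormSq g) = mulNormSq (divergence g) + (2 : ℝ) • dirGrad g :=
    LinearMap.congr_fun divergence_mul_mulNormSq g
  have hlapl : laplX (divergence g) = divergence (laplX g) :=
    LinearMap.congr_fun commute_laplX_divergence.eq g
  simp only [bosonic_apply, map_add, map_sub, map_smul, hgrad, hnorm, hlapl, Nat.cast_add,
    Nat.cast_one, e₂, e₄]
  match_scalars <;> field_simp
  all_goals ring

theorem fderiv_zero_prodMk_eq_eulerU (g : SmoothFn m) (p : Evec m × Evec m) :
    fderiv ℝ g p (0, p.2) = eulerU g p := by
  have h : ((0 : Evec m), p.2) = ∑ i, p.2 i • ((0 : Evec m), EuclideanSpace.single i (1 : ℝ)) := by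
    ext j
    · simp [Prod.fst_sum]
    · simp [Prod.snd_sum, Pi.single_apply]
  rw [h, map_sum]
  simp only [map_smul]
  simp [eulerU, mulCoord_apply, du, dir_apply]

theorem hasDerivAt_smul_snd (g : SmoothFn m) (x u : Evec m) (s : ℝ) :
    HasDerivAt (fun s : ℝ => g (x, s • u)) (fderiv ℝ g (x, s • u) (0, u)) s := by
  have hline : HasDerivAt (fun s : ℝ => (x, s • u)) ((0 : Evec m), u) s := by
    simpa using (hasDerivAt_const s x).prodMk ((hasDerivAt_id s).smul_const u)
  exact (differentiable g (x, s • u)).hasFDerivAt.comp_hasDerivAt s hline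

theorem eq_zero_of_eulerU_eq_neg {g : SmoothFn m} (h : eulerU g = -g) : g = 0 := by
  ext ⟨x, u⟩
  have hderiv (s : ℝ) : HasDerivAt (fun s : ℝ => s * g (x, s • u)) 0 s := by
    have heuler : s * fderiv ℝ g (x, s • u) (0, u) = -g (x, s • u) := by
      rw [← smul_eq_mul, ← map_smul, Prod.smul_mk, smul_zero, fderiv_zero_prodMk_eq_eulerU g
        (x, s • u), h]
      rfl
    exact ((hasDerivAt_id s).fun_mul (hasDerivAt_smul_snd g x u s)).congr_deriv
      (by simp [heuler])
  simpa using is_const_of_deriv_eq_zero (fun s => (hderiv s).differentiableAt)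
    (fun s => (hderiv s).deriv) 1 0

theorem eulerU_eq_smul_of_homogeneous {g : SmoothFn m} {k : ℕ}
    (h : ∀ (c : ℝ) (x u : Evec m), g (x, c • u) = c ^ k * g (x, u)) :
    eulerU g = (k : ℝ) • g := by
  ext ⟨x, u⟩
  have hderiv := hasDerivAt_smul_snd g x u 1
  simp only [h, one_smul] at hderiv
  rw [← fderiv_zero_prodMk_eq_eulerU,
    hderiv.unique ((hasDerivAt_pow k (1 : ℝ)).mul_const (g (x, u)))]
  simp

/-- The smooth functions that vanish on `O`. -/
def vanishing (O : Set (Evec m × Evec m)) : Submodule ℝ (SmoothFn m) where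
  carrier := {g | ∀ p ∈ O, g p = 0}
  add_mem' hf hg p hp := by simp [hf p hp, hg p hp]
  zero_mem' _ _ := rfl
  smul_mem' c g hg p hp := by simp [hg p hp]

section Vanishing

variable {O : Set (Evec m × Evec m)} {g : SmoothFn m}

theorem dir_mem_vanishing (hO : IsOpen O) (v : Evec m × Evec m) (hg : g ∈ vanishing O) :
    dir v g ∈ vanishing O := by
  intro p hp
  have : (g : Evec m × Evec m → ℝ) =ᶠ[𝓝 p] fun _ => 0 := by
    filter_upwards [hO.mem_nhds hp] with q hq using hg q hq
  rw [dir_apply, this.fderiv_eq]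
  simp

theorem mulCoord_mem_vanishing (i : Fin m) (hg : g ∈ vanishing O) :
    mulCoord i g ∈ vanishing O := fun p hp => by
  rw [mulCoord_apply, hg p hp, mul_zero]

theorem dirGrad_mem_vanishing (hO : IsOpen O) (hg : g ∈ vanishing O) :
    dirGrad g ∈ vanishing O := by
  rw [dirGrad, LinearMap.sum_apply]
  exact Submodule.sum_mem _ fun i _ => mulCoord_mem_vanishing i (dir_mem_vanishing hO _ hg)

theorem divergence_mem_vanishing (hO : IsOpen O) (hg : g ∈ vanishing O) :
    divergence g ∈ vanishing O := by
  rw [divergence, LinearMap.sum_apply]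
  exact Submodule.sum_mem _ fun i _ => dir_mem_vanishing hO _ (dir_mem_vanishing hO _ hg)

theorem mulNormSq_mem_vanishing (hg : g ∈ vanishing O) : mulNormSq g ∈ vanishing O := by
  rw [mulNormSq, LinearMap.sum_apply]
  exact Submodule.sum_mem _ fun i _ => mulCoord_mem_vanishing i (mulCoord_mem_vanishing i hg)

theorem laplX_pow_mem_vanishing (hO : IsOpen O) (hg : g ∈ vanishing O) (n : ℕ) :
    (laplX ^ n) g ∈ vanishing O := by
  induction n with
  | zero => simpa using hg
  | succ n ih =>
    rw [pow_succ', Module.End.mul_apply, laplX, LinearMap.sum_apply]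
    exact Submodule.sum_mem _ fun i _ => dir_mem_vanishing hO _ (dir_mem_vanishing hO _ ih)

theorem laplX_pow_succ_mem_vanishing (hO : IsOpen O) {n k : ℕ} (hg : bosonic k g ∈ vanishing O)
    (hdiv : (laplX ^ n) (divergence g) ∈ vanishing O) : (laplX ^ (n + 1)) g ∈ vanishing O := by
  have comm {A : Module.End ℝ (SmoothFn m)} (hA : Commute laplX A) (f : SmoothFn m) :
      (laplX ^ n) (A f) = A ((laplX ^ n) f) := LinearMap.congr_fun (hA.pow_left n).eq f
  have hlapl := laplX_pow_mem_vanishing hO hg n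
  rw [bosonic_apply, map_add, map_sub, map_smul, map_smul, ← Module.End.mul_apply, ← pow_succ,
    comm commute_laplX_dirGrad, comm commute_laplX_mulNormSq,
    comm commute_laplX_divergence (divergence g)] at hlapl
  have hgrad := Submodule.smul_mem _ (4 / ((m : ℝ) + 2 * k - 2)) (dirGrad_mem_vanishing hO hdiv)
  have hnorm := Submodule.smul_mem _ (4 / (((m : ℝ) + 2 * k - 2) * ((m : ℝ) + 2 * k - 4)))
    (mulNormSq_mem_vanishing (divergence_mem_vanishing hO hdiv))
  exact (Submodule.sub_mem_iff_left _ hgrad).1 ((Submodule.add_mem_iff_left _ hnorm).1 hlapl)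

theorem laplX_pow_succ_mem_vanishing_of_bosonic (hm : ∀ n : ℕ, m + 2 * n ≠ 4) (hO : IsOpen O)
    {k : ℕ} (hdeg : eulerU g = (k : ℝ) • g) (hg : bosonic k g ∈ vanishing O) :
    (laplX ^ (k + 1)) g ∈ vanishing O := by
  have hdeg_div := eulerU_divergence hdeg
  induction k generalizing g with
  | zero =>
    have hdiv : divergence g = 0 := eq_zero_of_eulerU_eq_neg (by rw [hdeg_div]; module)
    exact laplX_pow_succ_mem_vanishing hO hg (by simp [hdiv])
  | succ k ih =>
    rw [Nat.cast_succ, add_sub_cancel_right] at hdeg_div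
    refine laplX_pow_succ_mem_vanishing hO hg (ih hdeg_div ?_ (eulerU_divergence hdeg_div))
    have h := divergence_mem_vanishing hO hg
    rw [divergence_bosonic_succ hm] at h
    refine (Submodule.smul_mem_iff _ (div_ne_zero ?_ ?_)).1 h
    · exact sub_ne_zero.2 (by exact_mod_cast hm k)
    · exact_mod_cast fun h => hm (k + 2) (by omega)

end Vanishing

theorem pd1_eq_dx (i : Fin m) (g : SmoothFn m) :
    pd1 i (fun x u => g (x, u)) = fun x u => dx i g (x, u) := by
  ext x u
  have h := (differentiable g (x, u)).hasFDerivAt.comp x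
    (hasFDerivAt_prodMk_left (𝕜 := ℝ) x u)
  change fderiv ℝ (g ∘ fun x => (x, u)) x _ = _
  rw [h.fderiv]
  simp [dx, dir_apply]

theorem pd2_eq_du (i : Fin m) (g : SmoothFn m) :
    pd2 i (fun x u => g (x, u)) = fun x u => du i g (x, u) := by
  ext x u
  have h := (differentiable g (x, u)).hasFDerivAt.comp u
    (hasFDerivAt_prodMk_right (𝕜 := ℝ) x u)
  change fderiv ℝ (g ∘ fun u => (x, u)) u _ = _
  rw [h.fderiv]
  simp [du, dir_apply]

theorem iterate_lapl_eq_laplX_pow (n : ℕ) (g : SmoothFn m) (u : Evec m) :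
    lapl^[n] (fun x => g (x, u)) = fun x => (laplX ^ n) g (x, u) := by
  have hpdv (i : Fin m) (g : SmoothFn m) :
      pdv i (fun x => g (x, u)) = fun x => dx i g (x, u) :=
    funext fun x => congrFun (congrFun (pd1_eq_dx i g) x) u
  induction n generalizing g with
  | zero => rfl
  | succ n ih =>
    have hlapl : lapl (fun x => g (x, u)) = fun x => laplX g (x, u) := by
      ext x
      simp [lapl, hpdv, laplX]
    rw [Function.iterate_succ_apply, hlapl, ih, pow_succ, Module.End.mul_apply]

theorem Dk_eq_bosonic (k : ℕ) (g : SmoothFn m) (x u : Evec m) :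
    Dk m k (fun x u => g (x, u)) x u = bosonic k g (x, u) := by
  have hgrad : dirGrad (divergence g) (x, u) =
      ∑ i, ∑ j, u i * dx i (du j (dx j g)) (x, u) := by
    simpa [dirGrad, divergence, mulCoord_apply] using Finset.sum_comm
  have hdiv : divergence (divergence g) (x, u) =
      ∑ i, ∑ j, du i (dx i (du j (dx j g))) (x, u) := by
    simpa [divergence] using Finset.sum_comm
  have hnorm : mulNormSq (divergence (divergence g)) (x, u) =
      ‖u‖ ^ 2 * divergence (divergence g) (x, u) := by
    rw [EuclideanSpace.real_norm_sq_eq, Finset.sum_mul]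
    simp [mulNormSq, mulCoord_apply, sq, mul_assoc]
  have hlapl : laplX g (x, u) = ∑ i, dx i (dx i g) (x, u) := by simp [laplX]
  simp only [Dk, pd1_eq_dx, pd2_eq_du, bosonic, LinearMap.add_apply, LinearMap.sub_apply,
    LinearMap.smul_apply, Module.End.mul_apply, Submodule.coe_add, Submodule.coe_sub,
    Submodule.coe_smul, Pi.add_apply, Pi.sub_apply, Pi.smul_apply, smul_eq_mul, hgrad, hnorm,
    hdiv, hlapl]
  ring

theorem iterate_lapl_eq_zero_of_Dk_eq_zero (hm : ∀ n : ℕ, m + 2 * n ≠ 4) {k : ℕ}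
    {g : SmoothFn m} {U V : Set (Evec m)} (hU : IsOpen U) (hV : IsOpen V)
    (hg : ∀ (c : ℝ) (x u : Evec m), g (x, c • u) = c ^ k * g (x, u))
    (hD : ∀ x ∈ U, ∀ u ∈ V, Dk m k (fun x u => g (x, u)) x u = 0)
    {x u : Evec m} (hx : x ∈ U) (hu : u ∈ V) :
    lapl^[k + 1] (fun x => g (x, u)) x = 0 := by
  have hvanish : bosonic k g ∈ vanishing (U ×ˢ V) := fun p hp => by
    rw [← Dk_eq_bosonic]
    exact hD p.1 hp.1 p.2 hp.2
  rw [iterate_lapl_eq_laplX_pow]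
  exact laplX_pow_succ_mem_vanishing_of_bosonic hm (hU.prod hV)
    (eulerU_eq_smul_of_homogeneous hg) hvanish (x, u) ⟨hx, hu⟩

end SmoothFn

section Polyharmonic

variable {m : ℕ} {G : Evec m → ℝ} {h H : ℝ → ℝ}

theorem contDiff_pdv (hG : ContDiff ℝ ∞ G) (i : Fin m) : ContDiff ℝ ∞ (pdv i G) :=
  (hG.fderiv_right (m := ∞) (by simp)).clm_apply contDiff_const

theorem contDiff_lapl (hG : ContDiff ℝ ∞ G) : ContDiff ℝ ∞ (lapl G) :=
  ContDiff.sum fun i _ => contDiff_pdv (contDiff_pdv hG i) i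

theorem fderiv_apply_eq_sum_pdv (G : Evec m → ℝ) (z y : Evec m) :
    fderiv ℝ G z y = ∑ i, pdv i G z * y i := by
  conv_lhs => rw [← (EuclideanSpace.basisFun (Fin m) ℝ).sum_repr y]
  simp [map_sum, pdv, mul_comm]

theorem pdv_comp_add_smul (hG : Differentiable ℝ G) (x : Evec m) (s : ℝ) (i : Fin m) (y : Evec m) :
    pdv i (fun y => G (x + s • y)) y = s * pdv i G (x + s • y) := by
  have hline : HasFDerivAt (fun y : Evec m => x + s • y) (s • ContinuousLinearMap.id ℝ _) y :=
    ((hasFDerivAt_id y).const_smul s).const_add x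
  change fderiv ℝ (G ∘ fun y => x + s • y) y _ = _
  rw [((hG _).hasFDerivAt.comp y hline).fderiv]
  simp [pdv]

/-- A smooth profile `h` vanishing on `[1, ∞)`, so that `y ↦ h (‖y‖ ^ 2)` is a smooth radial
function supported in the closed unit ball. -/
structure IsRadialProfile (h : ℝ → ℝ) : Prop where
  contDiff : ContDiff ℝ ∞ h
  eq_zero_of_one_le : ∀ r, 1 ≤ r → h r = 0

/-- The radial function `y ↦ h (‖y‖ ^ 2)` rescaled to the ball of radius `r`, with unchanged
integral. -/
def dilate (h : ℝ → ℝ) (r : ℝ) (y : Evec m) : ℝ :=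
  (r ^ m)⁻¹ * h (‖r⁻¹ • y‖ ^ 2)

namespace IsRadialProfile

theorem eq_zero_of_one_le_norm (hh : IsRadialProfile h) {y : Evec m} (hy : 1 ≤ ‖y‖) :
    h (‖y‖ ^ 2) = 0 :=
  hh.eq_zero_of_one_le _ (one_le_pow₀ hy)

theorem contDiff_norm_sq (hh : IsRadialProfile h) :
    ContDiff ℝ ∞ fun y : Evec m => h (‖y‖ ^ 2) :=
  hh.contDiff.comp (_root_.contDiff_norm_sq ℝ)

theorem hasCompactSupport (hh : IsRadialProfile h) :
    HasCompactSupport fun y : Evec m => h (‖y‖ ^ 2) :=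
  HasCompactSupport.intro (isCompact_closedBall (0 : Evec m) 1) fun _ hy =>
    hh.eq_zero_of_one_le_norm (not_le.1 fun hle => hy (mem_closedBall_zero_iff.2 hle)).le

theorem integrable_mul (hh : IsRadialProfile h) {F : Evec m → ℝ} (hF : Continuous F) :
    Integrable fun y => h (‖y‖ ^ 2) * F y :=
  (hh.contDiff_norm_sq.continuous.mul hF).integrable_of_hasCompactSupport
    hh.hasCompactSupport.mul_right

theorem exists_antideriv (hh : IsRadialProfile h) :
    ∃ H, IsRadialProfile H ∧ ∀ r, HasDerivAt H (h r) r := by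
  have hd (r : ℝ) : HasDerivAt (fun r => ∫ t in (1 : ℝ)..r, h t) (h r) r :=
    (hh.contDiff.continuous.integral_hasStrictDerivAt 1 r).hasDerivAt
  refine ⟨fun r => ∫ t in (1 : ℝ)..r, h t, ⟨?_, fun r hr => ?_⟩, hd⟩
  · rw [contDiff_infty_iff_deriv, funext fun r => (hd r).deriv]
    exact ⟨fun r => (hd r).differentiableAt, hh.contDiff⟩
  · rw [intervalIntegral.integral_congr (g := fun _ => (0 : ℝ)) fun t ht => ?_]
    · simp
    · rw [Set.uIcc_of_le hr] at ht
      exact hh.eq_zero_of_one_le t ht.1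

theorem smoothTransition_one_sub : IsRadialProfile fun r => Real.smoothTransition (1 - r) where
  contDiff := Real.smoothTransition.contDiff.comp (contDiff_const.sub contDiff_id)
  eq_zero_of_one_le _ hr := Real.smoothTransition.zero_of_nonpos (by linarith)

theorem contDiff_dilate (hh : IsRadialProfile h) (r : ℝ) :
    ContDiff ℝ ∞ (dilate h r : Evec m → ℝ) :=
  contDiff_const.mul (hh.contDiff_norm_sq.comp (contDiff_id.const_smul _))

theorem dilate_eq_zero (hh : IsRadialProfile h) {r : ℝ} (hr : 0 < r) {y : Evec m}
    (hy : r ≤ ‖y‖) : dilate h r y = 0 := by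
  have : 1 ≤ ‖r⁻¹ • y‖ := by
    rwa [norm_smul, norm_inv, Real.norm_of_nonneg hr.le, inv_mul_eq_div, one_le_div hr]
  rw [dilate, hh.eq_zero_of_one_le_norm this, mul_zero]

theorem integrable_mul_dilate (hh : IsRadialProfile h) {r : ℝ} (hr : 0 < r)
    (hG : Continuous G) (x : Evec m) : Integrable fun z => G z * dilate h r (x - z) := by
  have hsupp : HasCompactSupport fun z => dilate h r (x - z) :=
    HasCompactSupport.intro (isCompact_closedBall x r) fun z hz => hh.dilate_eq_zero hr <| by
      rw [mem_closedBall', not_le, dist_eq_norm] at hz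
      exact hz.le
  exact (hG.mul ((hh.contDiff_dilate r).continuous.comp (by fun_prop)))
    |>.integrable_of_hasCompactSupport hsupp.mul_left

end IsRadialProfile

/-- The (unnormalised) mean of `G` over the ball of centre `x` and radius `s`, weighted by the
radial profile `h`. -/
def radialMean (h : ℝ → ℝ) (G : Evec m → ℝ) (x : Evec m) (s : ℝ) : ℝ :=
  ∫ y, h (‖y‖ ^ 2) * G (x + s • y)

theorem radialMean_zero (h : ℝ → ℝ) (G : Evec m → ℝ) (x : Evec m) :
    radialMean h G x 0 = (∫ y : Evec m, h (‖y‖ ^ 2)) * G x := by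
  simp [radialMean, integral_mul_const]

theorem radialMean_eq_integral_mul (h : ℝ → ℝ) (G : Evec m → ℝ) (x : Evec m) {s : ℝ}
    (hs : 0 < s) :
    radialMean h G x s = ∫ z, G z * dilate h s (x - z) := by
  have hscale := Measure.integral_comp_smul (volume : Measure (Evec m))
    (fun y => h (‖s⁻¹ • y‖ ^ 2) * G (x + y)) s
  simp only [smul_smul, inv_mul_cancel₀ hs.ne', one_smul] at hscale
  rw [radialMean, hscale, finrank_euclideanSpace_fin, abs_of_pos (by positivity), ← integral_smul,
    ← integral_add_left_eq_self (fun z => G z * _) x]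
  simp [dilate, smul_neg, norm_neg, mul_comm, mul_left_comm]

theorem hasDerivAt_radialMean (hh : IsRadialProfile h) (hG : ContDiff ℝ 1 G) (x : Evec m)
    (s : ℝ) :
    HasDerivAt (radialMean h G x) (∫ y, h (‖y‖ ^ 2) * fderiv ℝ G (x + s • y) y) s := by
  have hhc : Continuous fun y : Evec m => h (‖y‖ ^ 2) := hh.contDiff_norm_sq.continuous
  have hGc := hG.continuous
  have : Continuous (fderiv ℝ G) := hG.continuous_fderiv (by simp)
  have hline (y : Evec m) (t : ℝ) :
      HasDerivAt (fun t : ℝ => G (x + t • y)) (fderiv ℝ G (x + t • y) y) t := by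
    have : HasDerivAt (fun t : ℝ => x + t • y) y t := by
      simpa using ((hasDerivAt_id t).smul_const y).const_add x
    exact (hG.differentiable (by simp) _).hasFDerivAt.comp_hasDerivAt t this
  have hcont : Continuous fun p : ℝ × Evec m =>
      h (‖p.2‖ ^ 2) * fderiv ℝ G (x + p.1 • p.2) p.2 :=
    (hhc.comp continuous_snd).mul (by fun_prop)
  obtain ⟨C, hC⟩ := ((isCompact_closedBall s 1).prod
    (isCompact_closedBall (0 : Evec m) 1)).exists_bound_of_continuousOn hcont.continuousOn
  refine (hasDerivAt_integral_of_dominated_loc_of_deriv_le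
    (bound := (closedBall (0 : Evec m) 1).indicator fun _ => C) (ball_mem_nhds s one_pos)
    (Eventually.of_forall fun t => (hh.integrable_mul (by fun_prop)).aestronglyMeasurable)
    (hh.integrable_mul (by fun_prop)) (hh.integrable_mul (by fun_prop)).aestronglyMeasurable
    (Eventually.of_forall fun y t ht => ?_)
    ((integrable_indicator_iff measurableSet_closedBall).2
      (integrableOn_const (isCompact_closedBall _ _).measure_lt_top.ne))
    (Eventually.of_forall fun y t _ => (hline y t).const_mul _)).2
  by_cases hy : y ∈ closedBall (0 : Evec m) 1
  · rw [Set.indicator_of_mem hy]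
    exact hC (t, y) ⟨ball_subset_closedBall ht, hy⟩
  · rw [Set.indicator_of_notMem hy]
    rw [mem_closedBall_zero_iff, not_le] at hy
    simp [hh.eq_zero_of_one_le_norm hy.le]

theorem pdv_comp_norm_sq (hHh : ∀ r, HasDerivAt H (h r) r) (i : Fin m) (y : Evec m) :
    pdv i (fun y => H (‖y‖ ^ 2)) y = 2 * h (‖y‖ ^ 2) * y i := by
  have hsq : HasFDerivAt (fun y : Evec m => ‖y‖ ^ 2) (2 • innerSL ℝ y) y :=
    (hasStrictFDerivAt_norm_sq y).hasFDerivAt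
  change fderiv ℝ (H ∘ fun y : Evec m => ‖y‖ ^ 2) y _ = _
  rw [((hHh (‖y‖ ^ 2)).comp_hasFDerivAt y hsq).fderiv]
  simp [EuclideanSpace.inner_single_right]
  ring

theorem integral_radial_mul_coord (hh : IsRadialProfile h) (hH : IsRadialProfile H)
    (hHh : ∀ r, HasDerivAt H (h r) r) {F : Evec m → ℝ} (hF : ContDiff ℝ ∞ F) (i : Fin m) :
    ∫ y, h (‖y‖ ^ 2) * (F y * y i) = -(1 / 2) * ∫ y, H (‖y‖ ^ 2) * pdv i F y := by
  have hFc := hF.continuous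
  have hF'c := (contDiff_pdv hF i).continuous
  have hparts := integral_mul_fderiv_eq_neg_fderiv_mul_of_integrable
    (μ := (volume : Measure (Evec m))) (v := EuclideanSpace.single i (1 : ℝ))
    (f := F) (g := fun y => H (‖y‖ ^ 2))
    (by simpa only [pdv, mul_comm (H _)] using hH.integrable_mul hF'c)
    (by
      refine (hh.integrable_mul (F := fun y => 2 * (F y * y i)) (by fun_prop)).congr
        (Eventually.of_forall fun y => ?_)
      change _ = F y * pdv i (fun y => H (‖y‖ ^ 2)) y
      rw [pdv_comp_norm_sq hHh]
      ring)
    (by simpa only [mul_comm (H _)] using hH.integrable_mul hFc)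
    (fun y _ => hF.differentiable (by simp) y)
    (fun y _ => hH.contDiff_norm_sq.differentiable (by simp) y)
  change ∫ y, F y * pdv i (fun y => H (‖y‖ ^ 2)) y = -∫ y, pdv i F y * H (‖y‖ ^ 2) at hparts
  simp only [mul_comm (H _), neg_mul, one_div, ← mul_neg, ← hparts, pdv_comp_norm_sq hHh]
  rw [← integral_const_mul]
  exact integral_congr_ae (Eventually.of_forall fun y => by ring)

theorem integral_radial_mul_fderiv (hh : IsRadialProfile h) (hH : IsRadialProfile H)
    (hHh : ∀ r, HasDerivAt H (h r) r) (hG : ContDiff ℝ ∞ G) (x : Evec m) (s : ℝ) :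
    ∫ y, h (‖y‖ ^ 2) * fderiv ℝ G (x + s • y) y = -(s / 2) * radialMean H (lapl G) x s := by
  have hG₁ (i : Fin m) := (contDiff_pdv hG i).continuous
  have hG₂ (i : Fin m) := (contDiff_pdv (contDiff_pdv hG i) i).continuous
  have hcoord (i : Fin m) : ∫ y, h (‖y‖ ^ 2) * (pdv i G (x + s • y) * y i) =
      -(s / 2) * ∫ y, H (‖y‖ ^ 2) * pdv i (pdv i G) (x + s • y) := by
    have hF : ContDiff ℝ ∞ fun y => pdv i G (x + s • y) :=
      (contDiff_pdv hG i).comp (contDiff_const.add (contDiff_id.const_smul s))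
    rw [integral_radial_mul_coord hh hH hHh hF]
    simp only [pdv_comp_add_smul ((contDiff_pdv hG i).differentiable (by simp)),
      mul_left_comm (H _)]
    rw [integral_const_mul]
    ring
  simp only [radialMean, lapl, fderiv_apply_eq_sum_pdv, Finset.mul_sum]
  rw [integral_finsetSum _ fun i _ => hh.integrable_mul (by fun_prop),
    integral_finsetSum _ fun i _ => hH.integrable_mul (by fun_prop), Finset.mul_sum]
  exact Finset.sum_congr rfl fun i _ => hcoord i

theorem radialMean_eq_zero (hh : IsRadialProfile h) {x : Evec m} {s : ℝ} (hs : 0 ≤ s)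
    (hG : ∀ y ∈ closedBall x s, G y = 0) : radialMean h G x s = 0 := by
  refine integral_eq_zero_of_ae (Eventually.of_forall fun y => ?_)
  rcases le_total ‖y‖ 1 with hy | hy
  · have hmem : x + s • y ∈ closedBall x s := by
      rw [mem_closedBall, dist_eq_norm, add_sub_cancel_left, norm_smul, Real.norm_of_nonneg hs]
      exact mul_le_of_le_one_right hs hy
    simp [hG _ hmem]
  · simp [hh.eq_zero_of_one_le_norm hy]

open Polynomial in
theorem exists_derivative_eq_and_eval_zero_eq {K : Type*} [Field K] [CharZero K] {n : ℕ}
    {Q : K[X]} (hQ : Q.degree < n) (c : K) :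
    ∃ P : K[X], derivative P = Q ∧ P.eval 0 = c ∧ P.degree < (n + 1 : ℕ) := by
  refine ⟨∑ i ∈ Finset.range n, monomial (i + 1) (Q.coeff i / (i + 1)) + C c, ?_, ?_, ?_⟩
  · have hcoeff (i : ℕ) : Q.coeff i / (i + 1) * ((i + 1 : ℕ) : K) = Q.coeff i := by
      rw [Nat.cast_succ, div_mul_cancel₀ _ (Nat.cast_add_one_ne_zero i)]
    simp only [derivative_add, derivative_C, add_zero, derivative_sum, derivative_monomial, hcoeff,
      Nat.add_sub_cancel]
    ext j
    rcases lt_or_ge j n with hj | hj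
    · simp [coeff_monomial, hj]
    · simp [coeff_monomial, hj.not_gt,
        coeff_eq_zero_of_degree_lt (hQ.trans_le (Nat.cast_le.2 hj))]
  · simp [eval_finsetSum]
  · refine (degree_add_le _ _).trans_lt (max_lt ?_ ?_)
    · refine (degree_sum_le _ _).trans_lt ((Finset.sup_lt_iff (WithBot.bot_lt_coe _)).2 ?_)
      exact fun i hi => (degree_monomial_le _ _).trans_lt
        (Nat.cast_lt.2 (Nat.succ_lt_succ (Finset.mem_range.1 hi)))
    · exact degree_C_le.trans_lt (Nat.cast_lt.2 n.succ_pos)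

open Polynomial in
theorem exists_radialMean_eq_eval (x : Evec m) (δ : ℝ) {n : ℕ} (hh : IsRadialProfile h)
    (hG : ContDiff ℝ ∞ G) (hx : ∀ y ∈ closedBall x δ, lapl^[n] G y = 0) :
    ∃ P : ℝ[X], P.degree < n ∧ ∀ s ∈ Set.Icc 0 δ, radialMean h G x s = P.eval (s ^ 2) := by
  induction n generalizing h G with
  | zero =>
    refine ⟨0, by simp, fun s hs => ?_⟩
    rw [eval_zero]
    exact radialMean_eq_zero hh hs.1 fun y hy => hx y (closedBall_subset_closedBall hs.2 hy)
  | succ n ih =>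
    obtain ⟨H, hH, hHh⟩ := hh.exists_antideriv
    obtain ⟨Q, hQ, hQM⟩ := ih hH (contDiff_lapl hG) hx
    obtain ⟨P, hP, hP0, hPdeg⟩ := exists_derivative_eq_and_eval_zero_eq
      (Q := C (-(1 / 4)) * Q) (by rwa [degree_C_mul (by norm_num)]) (radialMean h G x 0)
    refine ⟨P, hPdeg, fun s hs => ?_⟩
    have hderiv (t : ℝ) (ht : t ∈ Set.Icc 0 δ) : HasDerivWithinAt
        (fun s => radialMean h G x s - P.eval (s ^ 2)) 0 (Set.Icc 0 δ) t := by
      have hPsq := (P.hasDerivAt (t ^ 2)).comp t (hasDerivAt_pow 2 t)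
      have hM := hasDerivAt_radialMean hh (hG.of_le (by simp)) x t
      refine ((hM.sub hPsq).congr_deriv ?_).hasDerivWithinAt
      rw [integral_radial_mul_fderiv hh hH hHh hG, hQM t ht, hP]
      simp
      ring
    have hconst := (convex_Icc (0 : ℝ) δ).norm_image_sub_le_of_norm_hasDerivWithin_le (C := 0)
      hderiv (fun t _ => by simp) (⟨le_rfl, hs.1.trans hs.2⟩ : (0 : ℝ) ∈ Set.Icc 0 δ) hs
    simpa [hP0, sub_eq_zero] using hconst

open Polynomial in
theorem eval_eq_sum_eval_lagrange_basis {F ι : Type*} [Field F] [DecidableEq ι] {s : Finset ι}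
    {v : ι → F} (hv : Set.InjOn v s) {P : F[X]} (hP : P.degree < s.card) (x : F) :
    P.eval x = ∑ i ∈ s, P.eval (v i) * (Lagrange.basis s v i).eval x := by
  conv_lhs => rw [Lagrange.eq_interpolate hv hP, Lagrange.interpolate_apply]
  simp [eval_finsetSum]

theorem exists_radii_and_weights {δ : ℝ} (hδ : 0 < δ) (n : ℕ) :
    ∃ r w : ℕ → ℝ, (∀ l, r l ∈ Set.Ioc 0 δ) ∧ ∀ P : Polynomial ℝ, P.degree < n →
      P.eval 0 = ∑ l ∈ Finset.range n, w l * P.eval (r l ^ 2) := by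
  have hr (l : ℕ) : δ / (l + 1) ∈ Set.Ioc 0 δ :=
    ⟨by positivity, div_le_self hδ.le (by linarith [l.cast_nonneg (α := ℝ)])⟩
  have hinj : Function.Injective fun l : ℕ => (δ / (l + 1)) ^ 2 := fun a b hab => by
    have hab' := (pow_left_inj₀ (hr a).1.le (hr b).1.le two_ne_zero).1 hab
    field_simp at hab'
    exact_mod_cast (add_right_cancel hab').symm
  refine ⟨fun l => δ / (l + 1), fun l => (Lagrange.basis (Finset.range n)
    (fun l : ℕ => (δ / ((l : ℝ) + 1)) ^ 2) l).eval 0, hr, fun P hP => ?_⟩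
  simpa only [mul_comm] using
    eval_eq_sum_eval_lagrange_basis (s := Finset.range n) hinj.injOn (by simpa using hP) 0

theorem exists_isRadialProfile_integral_pos (m : ℕ) :
    ∃ h, IsRadialProfile h ∧ 0 < ∫ y : Evec m, h (‖y‖ ^ 2) :=
  ⟨_, .smoothTransition_one_sub, IsRadialProfile.smoothTransition_one_sub.contDiff_norm_sq
    |>.continuous.integral_pos_of_hasCompactSupport_nonneg_nonzero
    IsRadialProfile.smoothTransition_one_sub.hasCompactSupport
    (fun _ => Real.smoothTransition.nonneg _) (x := 0) (by simp)⟩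

-- The radial means at finitely many radii are extrapolated to radius `0` by Lagrange interpolation.
theorem exists_polyharmonic_kernel (m n : ℕ) {δ : ℝ} (hδ : 0 < δ) :
    ∃ κ : Evec m → ℝ, ContDiff ℝ ∞ κ ∧ Function.support κ ⊆ ball 0 δ ∧
      ∀ (G : Evec m → ℝ) (x : Evec m), ContDiff ℝ ∞ G →
        (∀ y ∈ closedBall x δ, lapl^[n] G y = 0) → G x = ∫ z, G z * κ (x - z) := by
  obtain ⟨r, w, hr, hw⟩ := exists_radii_and_weights hδ n
  obtain ⟨h, hh, hpos⟩ := exists_isRadialProfile_integral_pos m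
  set I := ∫ y : Evec m, h (‖y‖ ^ 2)
  refine ⟨fun y => I⁻¹ * ∑ l ∈ Finset.range n, w l * dilate h (r l) y, contDiff_const.mul
    (ContDiff.sum fun l _ => contDiff_const.mul (hh.contDiff_dilate (r l))), fun y hy => ?_,
    fun G x hG hx => ?_⟩
  · contrapose! hy
    rw [mem_ball_zero_iff, not_lt] at hy
    simp [hh.dilate_eq_zero (hr _).1 ((hr _).2.trans hy)]
  · obtain ⟨P, hP, hPM⟩ := exists_radialMean_eq_eval x δ hh hG hx
    have hmean : I * G x = ∑ l ∈ Finset.range n, w l * radialMean h G x (r l) := by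
      rw [← radialMean_zero, hPM 0 ⟨le_rfl, hδ.le⟩, zero_pow two_ne_zero, hw P hP]
      exact Finset.sum_congr rfl fun l _ => by rw [hPM _ ⟨(hr l).1.le, (hr l).2⟩]
    have hsum (z : Evec m) :
        G z * (I⁻¹ * ∑ l ∈ Finset.range n, w l * dilate h (r l) (x - z)) =
          I⁻¹ * ∑ l ∈ Finset.range n, w l * (G z * dilate h (r l) (x - z)) := by
      simp only [Finset.mul_sum]
      exact Finset.sum_congr rfl fun l _ => by ring
    simp only [hsum]
    rw [integral_const_mul, integral_finsetSum _ fun l _ =>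
      (hh.integrable_mul_dilate (hr l).1 hG.continuous x).const_mul _,
      ← inv_mul_cancel_left₀ hpos.ne' (G x), hmean]
    simp only [integral_const_mul, radialMean_eq_integral_mul h G x (hr _).1]

end Polyharmonic

section IteratedDerivatives

variable {m : ℕ} {f g : Evec m → ℝ} {x : Evec m}

theorem contDiffAt_pdv {n n' : WithTop ℕ∞} (hf : ContDiffAt ℝ n f x) (h : n' + 1 ≤ n)
    (i : Fin m) : ContDiffAt ℝ n' (pdv i f) x :=
  (hf.fderiv_right h).clm_apply contDiffAt_const

theorem pdv_congr_of_eventuallyEq (h : f =ᶠ[𝓝 x] g) (i : Fin m) : pdv i f =ᶠ[𝓝 x] pdv i g :=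
  h.fderiv.fun_comp fun L => L (EuclideanSpace.single i 1)

theorem hasCompactSupport_pdv (hf : HasCompactSupport f) (i : Fin m) :
    HasCompactSupport (pdv i f) :=
  hf.fderiv_apply ℝ _

theorem pdv_convolution (hf : LocallyIntegrable f) (hc : HasCompactSupport g)
    (hg : ContDiff ℝ 1 g) (i : Fin m) :
    pdv i (f ⋆[lsmul ℝ ℝ] g) = f ⋆[lsmul ℝ ℝ] pdv i g := by
  funext x
  rw [pdv, (hc.hasFDerivAt_convolution_right _ hf hg x).fderiv,
    convolution_precompR_apply _ hf (hc.fderiv ℝ) (hg.continuous_fderiv (by simp))]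
  rfl

theorem contDiff_foldr_pdv (hf : ContDiff ℝ ∞ f) (L : List (Fin m)) :
    ContDiff ℝ ∞ (L.foldr pdv f) := by
  induction L with
  | nil => exact hf
  | cons i L ih => exact contDiff_pdv ih i

theorem contDiffAt_foldr_pdv (hf : ContDiffAt ℝ ∞ f x) (L : List (Fin m)) :
    ContDiffAt ℝ ∞ (L.foldr pdv f) x := by
  induction L with
  | nil => exact hf
  | cons i L ih => exact contDiffAt_pdv ih (by simp) i

theorem foldr_pdv_congr_of_eventuallyEq (h : f =ᶠ[𝓝 x] g) (L : List (Fin m)) :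
    L.foldr pdv f =ᶠ[𝓝 x] L.foldr pdv g := by
  induction L with
  | nil => exact h
  | cons i L ih => exact pdv_congr_of_eventuallyEq ih i

theorem hasCompactSupport_foldr_pdv (hf : HasCompactSupport f) (L : List (Fin m)) :
    HasCompactSupport (L.foldr pdv f) := by
  induction L with
  | nil => exact hf
  | cons i L ih => exact hasCompactSupport_pdv ih i

theorem foldr_pdv_convolution (hf : LocallyIntegrable f) (hc : HasCompactSupport g)
    (hg : ContDiff ℝ ∞ g) (L : List (Fin m)) :
    L.foldr pdv (f ⋆[lsmul ℝ ℝ] g) = f ⋆[lsmul ℝ ℝ] L.foldr pdv g := by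
  induction L with
  | nil => rfl
  | cons i L ih =>
    rw [List.foldr_cons, ih, pdv_convolution hf (hasCompactSupport_foldr_pdv hc L)
      ((contDiff_foldr_pdv hg L).of_le (by simp)), List.foldr_cons]

end IteratedDerivatives

section ArzelaAscoli

theorem equicontinuousAt_pi {X ι κ : Type*} {β : κ → Type*} [TopologicalSpace X] [Finite κ]
    [∀ l, PseudoMetricSpace (β l)] {a : ι → X → ∀ l, β l} {x : X}
    (h : ∀ l, EquicontinuousAt (fun n x => a n x l) x) : EquicontinuousAt a x := by
  have := Fintype.ofFinite κ
  simp only [Metric.equicontinuousAt_iff_right] at h ⊢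
  intro ε hε
  filter_upwards [eventually_all.2 fun l => h l ε hε] with y hy n
  exact (dist_pi_lt_iff hε).2 fun l => hy l n

theorem exists_subseq_tendstoLocallyUniformly {X β : Type*} [TopologicalSpace X]
    [LocallyCompactSpace X] [SigmaCompactSpace X] [MetricSpace β] [CompleteSpace β]
    (g : ℕ → C(X, β)) (heq : Equicontinuous fun n x => g n x)
    (hb : ∀ x, ∃ Q : Set β, IsCompact Q ∧ ∀ n, g n x ∈ Q) :
    ∃ φ : ℕ → ℕ, StrictMono φ ∧ ∃ f : C(X, β),
      TendstoLocallyUniformly (fun n x => g (φ n) x) f atTop := by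
  have : T2Space (UniformOnFun X β {K | IsCompact K}) := UniformOnFun.t2Space_of_covering <|
    Set.sUnion_eq_univ_iff.2 fun x => ⟨{x}, isCompact_singleton, rfl⟩
  have hcompact : IsCompact (closure (Set.range g)) := by
    refine ArzelaAscoli.isCompact_closure_of_isClosedEmbedding (𝔖 := {K | IsCompact K})
      (F := fun f : C(X, β) => (f : X → β)) (fun K hK => hK)
      (ContinuousMap.isUniformEmbedding_toUniformOnFunIsCompact.isClosedEmbedding) ?_ ?_
    · refine fun K _ => Equicontinuous.equicontinuousOn (fun x V hV => ?_) K
      filter_upwards [heq x V hV] with y hy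
      rintro ⟨_, n, rfl⟩
      exact hy n
    · intro K _ x _
      obtain ⟨Q, hQ, hgQ⟩ := hb x
      exact ⟨Q, hQ, by rintro _ ⟨n, rfl⟩; exact hgQ n⟩
  obtain ⟨f, -, φ, hφ, hf⟩ :=
    hcompact.isSeqCompact fun n => subset_closure (Set.mem_range_self (f := g) n)
  exact ⟨φ, hφ, f, ContinuousMap.tendsto_iff_tendstoLocallyUniformly.1 hf⟩

theorem exists_subseq_tendstoLocallyUniformlyOn {X β : Type*} [TopologicalSpace X] {Ω : Set X}
    [LocallyCompactSpace Ω] [SigmaCompactSpace Ω] [MetricSpace β] [CompleteSpace β] [Nonempty β]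
    {a : ℕ → X → β} (heq : EquicontinuousOn a Ω)
    (hb : ∀ x ∈ Ω, ∃ Q : Set β, IsCompact Q ∧ ∀ n, a n x ∈ Q) :
    ∃ φ : ℕ → ℕ, StrictMono φ ∧ ∃ f : X → β,
      TendstoLocallyUniformlyOn (fun n => a (φ n)) f atTop Ω := by
  obtain ⟨φ, hφ, f, hf⟩ := exists_subseq_tendstoLocallyUniformly
    (fun n => ⟨_, continuousOn_iff_continuous_domRestrict.1 (heq.continuousOn n)⟩)
    ((equicontinuous_restrict_iff a).2 heq) fun x => hb x x.2
  refine ⟨φ, hφ, Function.extend Subtype.val f fun _ => Classical.arbitrary β, ?_⟩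
  rw [tendstoLocallyUniformlyOn_iff_tendstoLocallyUniformly_comp_coe,
    Function.extend_comp Subtype.val_injective]
  exact hf

end ArzelaAscoli

section LocalKernel

theorem abs_setIntegral_mul_le {α : Type*} [MeasurableSpace α] {μ : Measure α} {K : Set α}
    {a g : α → ℝ} {η : ℝ} (hK : MeasurableSet K) (ha : IntegrableOn a K μ)
    (hg : ∀ z ∈ K, |g z| ≤ η) : |∫ z in K, a z * g z ∂μ| ≤ η * ∫ z in K, |a z| ∂μ := by
  rw [← integral_const_mul, ← Real.norm_eq_abs]
  refine norm_integral_le_of_norm_le (ha.abs.const_mul η)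
    ((ae_restrict_iff' hK).2 (Eventually.of_forall fun z hz => ?_))
  rw [norm_mul, mul_comm]
  exact mul_le_mul_of_nonneg_right (hg z hz) (abs_nonneg (a z))

variable {E : Type*} [NormedAddCommGroup E] [NormedSpace ℝ E]

/-- A smooth compactly supported kernel together with an open neighbourhood `nhd` of `x₀` on which
it is to reproduce functions from their values on the compact subset `dom` of `Ω`. -/
structure LocalKernel (Ω : Set E) (x₀ : E) where
  nhd : Set E
  dom : Set E
  ker : E → ℝ
  isOpen_nhd : IsOpen nhd
  mem_nhd : x₀ ∈ nhd
  nhd_subset_dom : nhd ⊆ dom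
  isCompact_dom : IsCompact dom
  dom_subset : dom ⊆ Ω
  contDiff_ker : ContDiff ℝ ∞ ker
  hasCompactSupport_ker : HasCompactSupport ker

variable {Ω : Set E} {x₀ : E}

namespace LocalKernel

theorem nhd_mem_nhds (𝒦 : LocalKernel Ω x₀) : 𝒦.nhd ∈ 𝓝 x₀ := 𝒦.isOpen_nhd.mem_nhds 𝒦.mem_nhd

theorem continuous_ker (𝒦 : LocalKernel Ω x₀) : Continuous 𝒦.ker := 𝒦.contDiff_ker.continuous

theorem exists_abs_ker_le (𝒦 : LocalKernel Ω x₀) : ∃ C, 0 < C ∧ ∀ y, |𝒦.ker y| ≤ C := by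
  obtain ⟨C, hC⟩ := 𝒦.hasCompactSupport_ker.exists_bound_of_continuous 𝒦.continuous_ker
  exact ⟨max C 1, by positivity, fun y => (hC y).trans (le_max_left C 1)⟩

variable [MeasurableSpace E] {μ : Measure E}

variable (μ) in
/-- The convolution of the truncation of `a` to `dom` with the kernel. -/
def conv (𝒦 : LocalKernel Ω x₀) (a : E → ℝ) : E → ℝ :=
  𝒦.dom.indicator a ⋆[lsmul ℝ ℝ, μ] 𝒦.ker

variable (μ) in
/-- On `nhd`, the function `a` is the convolution of its truncation to `dom` with the kernel. -/
structure Reproduces (𝒦 : LocalKernel Ω x₀) (a : E → ℝ) : Prop where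
  continuousOn : ContinuousOn a 𝒦.dom
  eqOn : Set.EqOn a (𝒦.conv μ a) 𝒦.nhd

variable (𝒦 : LocalKernel Ω x₀) {a b : E → ℝ}

theorem Reproduces.eventuallyEq {𝒦 : LocalKernel Ω x₀} (h : 𝒦.Reproduces μ a) {x : E}
    (hx : x ∈ 𝒦.nhd) : a =ᶠ[𝓝 x] 𝒦.conv μ a :=
  h.eqOn.eventuallyEq_of_mem (𝒦.isOpen_nhd.mem_nhds hx)

variable [BorelSpace E]

theorem conv_apply (a : E → ℝ) (x : E) :
    𝒦.conv μ a x = ∫ z in 𝒦.dom, a z * 𝒦.ker (x - z) ∂μ := by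
  rw [conv, convolution_def, ← integral_indicator 𝒦.isCompact_dom.measurableSet]
  refine integral_congr_ae (Eventually.of_forall fun z => ?_)
  by_cases hz : z ∈ 𝒦.dom <;> simp [hz]

variable [IsFiniteMeasureOnCompacts μ]

theorem integrableOn_mul_ker (ha : ContinuousOn a 𝒦.dom) (x : E) :
    IntegrableOn (fun z => a z * 𝒦.ker (x - z)) 𝒦.dom μ :=
  (ha.mul (𝒦.continuous_ker.comp (by fun_prop)).continuousOn).integrableOn_compact 𝒦.isCompact_dom

theorem locallyIntegrable_indicator (ha : ContinuousOn a 𝒦.dom) :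
    LocallyIntegrable (𝒦.dom.indicator a) μ :=
  ((integrable_indicator_iff 𝒦.isCompact_dom.measurableSet).2
    (ha.integrableOn_compact 𝒦.isCompact_dom)).locallyIntegrable

theorem abs_conv_le (ha : ContinuousOn a 𝒦.dom) {C : ℝ} (hC : ∀ y, |𝒦.ker y| ≤ C) (x : E) :
    |𝒦.conv μ a x| ≤ C * ∫ z in 𝒦.dom, |a z| ∂μ := by
  rw [conv_apply]
  exact abs_setIntegral_mul_le 𝒦.isCompact_dom.measurableSet
    (ha.integrableOn_compact 𝒦.isCompact_dom) fun z _ => hC _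

theorem conv_sub (ha : ContinuousOn a 𝒦.dom) (hb : ContinuousOn b 𝒦.dom) (x : E) :
    𝒦.conv μ a x - 𝒦.conv μ b x = 𝒦.conv μ (a - b) x := by
  simp only [conv_apply, Pi.sub_apply, sub_mul]
  exact (integral_sub (𝒦.integrableOn_mul_ker ha x) (𝒦.integrableOn_mul_ker hb x)).symm

variable {ι : Type*}

theorem tendstoUniformly_conv {p : Filter ι} {a : ι → E → ℝ} {f : E → ℝ}
    (ha : ∀ i, ContinuousOn (a i) 𝒦.dom) (hf : ContinuousOn f 𝒦.dom)
    (hlim : TendstoUniformlyOn a f p 𝒦.dom) :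
    TendstoUniformly (fun i => 𝒦.conv μ (a i)) (𝒦.conv μ f) p := by
  obtain ⟨C, hC, hker⟩ := 𝒦.exists_abs_ker_le
  set V := μ.real 𝒦.dom
  have hV : 0 ≤ V := measureReal_nonneg
  rw [Metric.tendstoUniformly_iff]
  intro ε hε
  filter_upwards [Metric.tendstoUniformlyOn_iff.1 hlim (ε / (C * (V + 1))) (by positivity)]
    with i hi x
  have hL1 : ∫ z in 𝒦.dom, |(f - a i) z| ∂μ ≤ ε / (C * (V + 1)) * V :=
    (le_abs_self _).trans <| norm_setIntegral_le_of_norm_le_const (f := fun z => |(f - a i) z|)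
      𝒦.isCompact_dom.measure_lt_top fun z hz => (abs_abs _).le.trans (hi z hz).le
  calc dist (𝒦.conv μ f x) (𝒦.conv μ (a i) x) = |𝒦.conv μ (f - a i) x| := by
        rw [Real.dist_eq, 𝒦.conv_sub hf (ha i)]
    _ ≤ C * ∫ z in 𝒦.dom, |(f - a i) z| ∂μ := 𝒦.abs_conv_le (hf.sub (ha i)) hker x
    _ ≤ C * (ε / (C * (V + 1)) * V) := mul_le_mul_of_nonneg_left hL1 hC.le
    _ = ε * V / (V + 1) := by field_simp
    _ < ε := by rw [div_lt_iff₀ (by positivity)]; linarith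

theorem uniformEquicontinuous_conv {a : ι → E → ℝ} (ha : ∀ i, ContinuousOn (a i) 𝒦.dom) {C : ℝ}
    (hC : ∀ i, ∫ z in 𝒦.dom, |a i z| ∂μ ≤ C) :
    UniformEquicontinuous fun i => 𝒦.conv μ (a i) := by
  rw [Metric.uniformEquicontinuous_iff]
  intro ε hε
  obtain ⟨r, hr, hker⟩ := Metric.uniformContinuous_iff.1
    (𝒦.hasCompactSupport_ker.uniformContinuous_of_continuous 𝒦.continuous_ker)
    (ε / (|C| + 1)) (by positivity)
  refine ⟨r, hr, fun x y hxy i => ?_⟩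
  calc dist (𝒦.conv μ (a i) x) (𝒦.conv μ (a i) y)
      = |∫ z in 𝒦.dom, a i z * (𝒦.ker (x - z) - 𝒦.ker (y - z)) ∂μ| := by
        simp only [conv_apply, mul_sub, Real.dist_eq]
        rw [integral_sub (𝒦.integrableOn_mul_ker (ha i) x) (𝒦.integrableOn_mul_ker (ha i) y)]
    _ ≤ ε / (|C| + 1) * ∫ z in 𝒦.dom, |a i z| ∂μ :=
        abs_setIntegral_mul_le 𝒦.isCompact_dom.measurableSet
          ((ha i).integrableOn_compact 𝒦.isCompact_dom)
          fun z _ => (hker (by rwa [dist_sub_right])).le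
    _ ≤ ε / (|C| + 1) * |C| :=
        mul_le_mul_of_nonneg_left ((hC i).trans (le_abs_self C)) (by positivity)
    _ < ε := by
        rw [div_mul_eq_mul_div, div_lt_iff₀ (by positivity)]
        linarith

namespace Reproduces

variable {𝒦}

theorem contDiffAt (h : 𝒦.Reproduces μ a) : ContDiffAt ℝ ∞ a x₀ :=
  ContDiffAt.congr_of_eventuallyEq (𝒦.hasCompactSupport_ker.contDiff_convolution_right _
    (𝒦.locallyIntegrable_indicator h.continuousOn) 𝒦.contDiff_ker).contDiffAt
    (h.eventuallyEq 𝒦.mem_nhd)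

theorem of_tendstoUniformlyOn {p : Filter ι} [p.NeBot] {a : ι → E → ℝ} {f : E → ℝ}
    (h : ∀ i, 𝒦.Reproduces μ (a i)) (hlim : TendstoUniformlyOn a f p 𝒦.dom) :
    𝒦.Reproduces μ f := by
  have hf : ContinuousOn f 𝒦.dom :=
    hlim.continuousOn (Frequently.of_forall fun i => (h i).continuousOn)
  refine ⟨hf, fun x hx => tendsto_nhds_unique (hlim.tendsto_at (𝒦.nhd_subset_dom hx)) ?_⟩
  exact ((𝒦.tendstoUniformly_conv (fun i => (h i).continuousOn) hf hlim).tendsto_at x).congr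
    fun i => ((h i).eqOn hx).symm

end Reproduces

end LocalKernel

variable [MeasurableSpace E]

/-- Near each point of `Ω`, a single kernel reproduces all functions of the family `a`. -/
def LocallyReproduced (μ : Measure E) (Ω : Set E) {ι : Type*} (a : ι → E → ℝ) : Prop :=
  ∀ x ∈ Ω, ∃ 𝒦 : LocalKernel Ω x, ∀ i, 𝒦.Reproduces μ (a i)

namespace LocallyReproduced

variable [BorelSpace E] {μ : Measure E} [IsFiniteMeasureOnCompacts μ] {ι : Type*}
  {a : ι → E → ℝ}

theorem contDiffAt (h : LocallyReproduced μ Ω a) (i : ι) {x : E} (hx : x ∈ Ω) :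
    ContDiffAt ℝ ∞ (a i) x :=
  let ⟨_, h𝒦⟩ := h x hx
  (h𝒦 i).contDiffAt

theorem equicontinuousAt (h : LocallyReproduced μ Ω a)
    (hbdd : ∀ K, IsCompact K → K ⊆ Ω → ∃ C, ∀ i, ∫ z in K, |a i z| ∂μ ≤ C) {x : E} (hx : x ∈ Ω) :
    EquicontinuousAt a x := by
  obtain ⟨𝒦, h𝒦⟩ := h x hx
  obtain ⟨C, hC⟩ := hbdd _ 𝒦.isCompact_dom 𝒦.dom_subset
  intro U hU
  filter_upwards [𝒦.nhd_mem_nhds, (𝒦.uniformEquicontinuous_conv (fun i => (h𝒦 i).continuousOn)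
    hC).equicontinuous x U hU] with y hy hconv i
  rw [(h𝒦 i).eqOn 𝒦.mem_nhd, (h𝒦 i).eqOn hy]
  exact hconv i

theorem exists_abs_le (h : LocallyReproduced μ Ω a)
    (hbdd : ∀ K, IsCompact K → K ⊆ Ω → ∃ C, ∀ i, ∫ z in K, |a i z| ∂μ ≤ C) {x : E} (hx : x ∈ Ω) :
    ∃ B, ∀ i, |a i x| ≤ B := by
  obtain ⟨𝒦, h𝒦⟩ := h x hx
  obtain ⟨C, hC⟩ := hbdd _ 𝒦.isCompact_dom 𝒦.dom_subset
  obtain ⟨D, hD, hker⟩ := 𝒦.exists_abs_ker_le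
  refine ⟨D * C, fun i => ?_⟩
  rw [(h𝒦 i).eqOn 𝒦.mem_nhd]
  exact (𝒦.abs_conv_le (h𝒦 i).continuousOn hker x).trans (mul_le_mul_of_nonneg_left (hC i) hD.le)

theorem exists_subseq_tendstoLocallyUniformlyOn [FiniteDimensional ℝ E] (hΩ : IsOpen Ω)
    {κ : Type*} [Finite κ] {a : ℕ → κ → E → ℝ}
    (h : ∀ l, LocallyReproduced μ Ω fun n => a n l)
    (hbdd : ∀ l K, IsCompact K → K ⊆ Ω → ∃ C, ∀ n, ∫ z in K, |a n l z| ∂μ ≤ C) :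
    ∃ φ : ℕ → ℕ, StrictMono φ ∧ ∃ f : κ → E → ℝ,
      ∀ l, TendstoLocallyUniformlyOn (fun n => a (φ n) l) (f l) atTop Ω := by
  have := Fintype.ofFinite κ
  have : ProperSpace E := FiniteDimensional.proper_real E
  have : LocallyCompactSpace Ω := hΩ.locallyCompactSpace
  choose! B hB using fun l x => (h l).exists_abs_le (x := x) (hbdd l)
  obtain ⟨φ, hφ, f, hf⟩ := _root_.exists_subseq_tendstoLocallyUniformlyOn (Ω := Ω)
    (a := fun n x l => a n l x)
    (fun x hx => (equicontinuousAt_pi fun l =>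
      (h l).equicontinuousAt (hbdd l) hx).equicontinuousWithinAt Ω)
    fun x hx => ⟨Set.univ.pi fun l => Set.Icc (-B l x) (B l x),
      isCompact_univ_pi fun _ => isCompact_Icc, fun n l _ => abs_le.1 (hB l x hx n)⟩
  exact ⟨φ, hφ, fun l x => f x l, fun l =>
    (Pi.uniformContinuous_proj _ l).comp_tendstoLocallyUniformlyOn hf⟩

theorem contDiffAt_of_tendstoLocallyUniformlyOn [FiniteDimensional ℝ E] (hΩ : IsOpen Ω)
    (h : LocallyReproduced μ Ω a) {p : Filter ι} [p.NeBot] {f : E → ℝ}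
    (hlim : TendstoLocallyUniformlyOn a f p Ω) {x : E} (hx : x ∈ Ω) : ContDiffAt ℝ ∞ f x := by
  have : ProperSpace E := FiniteDimensional.proper_real E
  obtain ⟨𝒦, h𝒦⟩ := h x hx
  exact (LocalKernel.Reproduces.of_tendstoUniformlyOn h𝒦 <|
    (tendstoLocallyUniformlyOn_iff_forall_isCompact hΩ).1 hlim _ 𝒦.dom_subset
      𝒦.isCompact_dom).contDiffAt

end LocallyReproduced

end LocalKernel

section DerivativeConvergence

variable {m : ℕ} {Ω : Set (Evec m)} {x₀ : Evec m}

namespace LocalKernel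

/-- The kernel differentiated along the coordinate directions in `L`. -/
def foldrPdv (𝒦 : LocalKernel Ω x₀) (L : List (Fin m)) : LocalKernel Ω x₀ where
  __ := 𝒦
  ker := L.foldr pdv 𝒦.ker
  contDiff_ker := contDiff_foldr_pdv 𝒦.contDiff_ker L
  hasCompactSupport_ker := hasCompactSupport_foldr_pdv 𝒦.hasCompactSupport_ker L

theorem Reproduces.foldr_pdv_eqOn {𝒦 : LocalKernel Ω x₀} {a : Evec m → ℝ}
    (h : 𝒦.Reproduces volume a) (L : List (Fin m)) :
    Set.EqOn (L.foldr pdv a) ((𝒦.foldrPdv L).conv volume a) 𝒦.nhd := fun x hx => by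
  rw [(foldr_pdv_congr_of_eventuallyEq (h.eventuallyEq hx) L).eq_of_nhds, conv,
    foldr_pdv_convolution (𝒦.locallyIntegrable_indicator h.continuousOn)
      𝒦.hasCompactSupport_ker 𝒦.contDiff_ker]
  rfl

end LocalKernel

theorem LocallyReproduced.tendstoLocallyUniformlyOn_foldr_pdv (hΩ : IsOpen Ω) {ι : Type*}
    {a : ι → Evec m → ℝ} (h : LocallyReproduced volume Ω a) {p : Filter ι} [p.NeBot]
    {f : Evec m → ℝ} (hlim : TendstoLocallyUniformlyOn a f p Ω) (L : List (Fin m)) :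
    TendstoLocallyUniformlyOn (fun i => L.foldr pdv (a i)) (L.foldr pdv f) p Ω := by
  refine tendstoLocallyUniformlyOn_of_forall_exists_nhds fun x hx => ?_
  obtain ⟨𝒦, h𝒦⟩ := h x hx
  have hdom : TendstoUniformlyOn a f p 𝒦.dom :=
    (tendstoLocallyUniformlyOn_iff_forall_isCompact hΩ).1 hlim _ 𝒦.dom_subset 𝒦.isCompact_dom
  have hf : 𝒦.Reproduces volume f := .of_tendstoUniformlyOn h𝒦 hdom
  refine ⟨𝒦.nhd, mem_nhdsWithin_of_mem_nhds 𝒦.nhd_mem_nhds, ?_⟩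
  exact ((((𝒦.foldrPdv L).tendstoUniformly_conv (fun i => (h𝒦 i).continuousOn) hf.continuousOn
    hdom).tendstoUniformlyOn.mono (Set.subset_univ _)).congr
      (Eventually.of_forall fun i => ((h𝒦 i).foldr_pdv_eqOn L).symm)).congr_right
        (hf.foldr_pdv_eqOn L).symm

end DerivativeConvergence

section FiniteSampling

theorem exists_finite_sampling {X : Type*} (V : Submodule ℝ (X → ℝ)) [FiniteDimensional ℝ V] :
    ∃ (S : Finset X) (e : S → X → ℝ), (∀ s, e s ∈ V) ∧
      ∀ v ∈ V, ∀ x, v x = ∑ s : S, v s * e s x := by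
  classical
  let restrict : ∀ S : Finset X, V →ₗ[ℝ] (S → ℝ) := fun S =>
    (LinearMap.funLeft ℝ ℝ ((↑) : S → X)).comp V.subtype
  obtain ⟨_, ⟨S, rfl⟩, hmin⟩ := IsArtinian.set_has_minimal
    (Set.range fun S => LinearMap.ker (restrict S)) ⟨_, ∅, rfl⟩
  have hinj : LinearMap.ker (restrict S) = ⊥ := by
    refine (Submodule.eq_bot_iff _).2 fun v hv => Subtype.ext (funext fun x => ?_)
    have hle : LinearMap.ker (restrict (insert x S)) ≤ LinearMap.ker (restrict S) := fun w hw => by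
      rw [LinearMap.mem_ker] at hw ⊢
      funext s
      exact congrFun hw ⟨s, Finset.mem_insert_of_mem s.2⟩
    rw [← hle.eq_of_not_lt (hmin _ ⟨_, rfl⟩), LinearMap.mem_ker] at hv
    exact congrFun hv ⟨x, Finset.mem_insert_self x S⟩
  obtain ⟨extend, hextend⟩ := (restrict S).exists_leftInverse_of_injective hinj
  refine ⟨S, fun s => (extend (Pi.single s 1) : V), fun s => (extend _).2, fun v hv x => ?_⟩
  have hsingle : restrict S ⟨v, hv⟩ = ∑ s : S, v s • Pi.single s (1 : ℝ) := by
    funext s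
    simp [restrict, LinearMap.funLeft_apply, Finset.sum_apply, Pi.single_apply]
  have hv_eq : extend (restrict S ⟨v, hv⟩) = ⟨v, hv⟩ := LinearMap.congr_fun hextend _
  rw [hsingle, map_sum] at hv_eq
  simpa only [map_smul, Submodule.coe_sum, Submodule.coe_smul, Finset.sum_apply, Pi.smul_apply,
    smul_eq_mul] using (congrFun (congrArg Subtype.val hv_eq) x).symm

end FiniteSampling

section HarmonicPolynomials

variable {m k : ℕ} {f g p : Evec m → ℝ}

theorem pdv_add (i : Fin m) (hf : Differentiable ℝ f) (hg : Differentiable ℝ g) :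
    pdv i (f + g) = pdv i f + pdv i g := by
  funext x
  simp [pdv, fderiv_add (hf x) (hg x)]

theorem pdv_const_smul (i : Fin m) (c : ℝ) (f : Evec m → ℝ) : pdv i (c • f) = c • pdv i f := by
  funext x
  simp [pdv, fderiv_const_smul_field]

theorem lapl_add (hf : ContDiff ℝ ∞ f) (hg : ContDiff ℝ ∞ g) :
    lapl (f + g) = lapl f + lapl g := by
  have hdiff {G : Evec m → ℝ} (hG : ContDiff ℝ ∞ G) : Differentiable ℝ G :=
    hG.differentiable (by simp)
  funext x
  simp only [lapl, pdv_add _ (hdiff hf) (hdiff hg),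
    pdv_add _ (hdiff (contDiff_pdv hf _)) (hdiff (contDiff_pdv hg _)), Pi.add_apply,
    Finset.sum_add_distrib]

theorem lapl_const_smul (c : ℝ) (f : Evec m → ℝ) : lapl (c • f) = c • lapl f := by
  funext x
  simp [lapl, pdv_const_smul, Finset.mul_sum]

theorem lapl_zero : lapl (0 : Evec m → ℝ) = 0 := by
  simpa using lapl_const_smul 0 (0 : Evec m → ℝ)

theorem IsHk.contDiff (hp : IsHk m k p) : ContDiff ℝ ∞ p := by
  obtain ⟨⟨P, hP⟩, -⟩ := hp
  rw [funext hP]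
  simp only [MvPolynomial.eval_eq]
  fun_prop

variable (m k) in
/-- The space `ℋ_k` as a space of functions. -/
def hkSpace : Submodule ℝ (Evec m → ℝ) where
  carrier := {p | IsHk m k p}
  zero_mem' := ⟨⟨0, by simp⟩, by simp, by simp [lapl_zero]⟩
  add_mem' := by
    rintro p q hp hq
    obtain ⟨P, hP⟩ := hp.1
    obtain ⟨Q, hQ⟩ := hq.1
    exact ⟨⟨P + Q, by simp [hP, hQ]⟩, by simp [hp.2.1, hq.2.1, mul_add],
      by simp [lapl_add hp.contDiff hq.contDiff, hp.2.2, hq.2.2]⟩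
  smul_mem' := by
    rintro c p ⟨⟨P, hP⟩, hhom, hharm⟩
    exact ⟨⟨MvPolynomial.C c * P, by simp [hP]⟩, by simp [hhom, mul_left_comm],
      by simp [lapl_const_smul, hharm]⟩

theorem IsHk.exists_totalDegree_le (hp : IsHk m k p) :
    ∃ P : MvPolynomial (Fin m) ℝ, P.totalDegree ≤ k ∧
      ∀ x : Evec m, p x = MvPolynomial.eval (fun i => x i) P := by
  obtain ⟨⟨P, hP⟩, hhom, -⟩ := hp
  refine ⟨MvPolynomial.homogeneousComponent k P,
    (MvPolynomial.homogeneousComponent_isHomogeneous k P).totalDegree_le, fun x => ?_⟩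
  have hline : ∑ d ∈ P.support, Polynomial.monomial d.degree (P.coeff d * ∏ i, x i ^ d i) =
      Polynomial.monomial k (p x) := by
    refine Polynomial.funext fun c => ?_
    rw [Polynomial.eval_finsetSum]
    simp only [Polynomial.eval_monomial]
    rw [mul_comm (p x), ← hhom c x, hP, MvPolynomial.eval_eq']
    refine Finset.sum_congr rfl fun d _ => ?_
    simp only [PiLp.smul_apply, smul_eq_mul, mul_pow, Finset.prod_mul_distrib,
      Finset.prod_pow_eq_pow_sum, Finsupp.degree_eq_sum]
    ring
  have hcoeff := congrArg (fun Q => Polynomial.coeff Q k) hline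
  simp only [Polynomial.finsetSum_coeff, Polynomial.coeff_monomial, if_true] at hcoeff
  rw [← hcoeff, MvPolynomial.homogeneousComponent_apply, map_sum, Finset.sum_filter]
  refine Finset.sum_congr rfl fun d _ => ?_
  simp [MvPolynomial.eval_monomial, Finsupp.prod_fintype]

instance finiteDimensional_hkSpace : FiniteDimensional ℝ (hkSpace m k) := by
  let evaluate : MvPolynomial.restrictTotalDegree (Fin m) ℝ k →ₗ[ℝ] (Evec m → ℝ) :=
    { toFun := fun P x => MvPolynomial.eval (fun i => x i) (P : MvPolynomial (Fin m) ℝ)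
      map_add' := fun P Q => by funext x; simp
      map_smul' := fun c P => by funext x; simp }
  have hle : hkSpace m k ≤ LinearMap.range evaluate := fun p hp => by
    obtain ⟨P, hP, hp⟩ := IsHk.exists_totalDegree_le hp
    exact ⟨⟨P, (MvPolynomial.mem_restrictTotalDegree _ _ _).2 hP⟩, funext fun x => (hp x).symm⟩
  exact Submodule.finiteDimensional_of_le hle

variable (m k) in
/-- A finite set of nodes in the unit ball from whose values each element of `ℋ_k` is recovered as
a linear combination of fixed elements of `ℋ_k`. -/
structure HkFrame (ι : Type*) [Fintype ι] where
  node : ι → Evec m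
  dual : ι → Evec m → ℝ
  node_mem : ∀ l, node l ∈ ball 0 1
  isHk_dual : ∀ l, IsHk m k (dual l)
  expand : ∀ q, IsHk m k q → ∀ u, q u = ∑ l, q (node l) * dual l u

variable (m k) in
theorem exists_hkFrame : ∃ S : Finset (Evec m), Nonempty (HkFrame m k S) := by
  obtain ⟨S, e, he, hS⟩ := exists_finite_sampling (hkSpace m k)
  have hpos (l : S) : 0 < ‖(l : Evec m)‖ + 1 := by positivity
  refine ⟨S, ⟨fun l => (‖(l : Evec m)‖ + 1)⁻¹ • (l : Evec m), fun l =>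
    (‖(l : Evec m)‖ + 1) ^ k • e l, fun l => ?_, fun l => (hkSpace m k).smul_mem _ (he _),
    fun q hq u => (hS q hq u).trans (Finset.sum_congr rfl fun l _ => ?_)⟩⟩
  · rw [mem_ball_zero_iff, norm_smul, norm_inv, Real.norm_of_nonneg (hpos l).le,
      inv_mul_eq_div, div_lt_one (hpos l)]
    exact lt_add_one _
  · have := (pow_pos (hpos l) k).ne'
    simp only [hq.2.1, Pi.smul_apply, smul_eq_mul, inv_pow]
    field_simp

theorem IsHk.exists_abs_le_mul_integral (k : ℕ) {u : Evec m} (hu : u ∈ ball 0 1) :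
    ∃ C : ℝ, ∀ q, IsHk m k q → |q u| ≤ C * ∫ v in ball (0 : Evec m) 1, |q v| := by
  rw [mem_ball_zero_iff] at hu
  obtain ⟨κ, hκ, hsupp, hrep⟩ := exists_polyharmonic_kernel m 1 (sub_pos.2 hu)
  obtain ⟨C, hC⟩ := (HasCompactSupport.intro (isCompact_closedBall (0 : Evec m) (1 - ‖u‖))
    fun y hy => Function.notMem_support.1 fun h => hy (ball_subset_closedBall (hsupp h))
    ).exists_bound_of_continuous hκ.continuous
  refine ⟨C, fun q hq => ?_⟩
  have hq_int : IntegrableOn q (ball (0 : Evec m) 1) :=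
    (hq.contDiff.continuous.continuousOn.integrableOn_compact
      (isCompact_closedBall (0 : Evec m) 1)).mono_set ball_subset_closedBall
  have hq_eq : q u = ∫ v in ball (0 : Evec m) 1, q v * κ (u - v) := by
    rw [hrep q u hq.contDiff fun y _ => hq.2.2 y, setIntegral_eq_integral_of_forall_compl_eq_zero]
    intro z hz
    have hz' : u - z ∉ ball (0 : Evec m) (1 - ‖u‖) := fun h => hz <| by
      rw [mem_ball_zero_iff] at h ⊢
      linarith [norm_le_norm_add_norm_sub u z]
    rw [Function.notMem_support.1 fun h => hz' (hsupp h), mul_zero]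
  rw [hq_eq]
  exact abs_setIntegral_mul_le measurableSet_ball hq_int fun v _ => hC _

end HarmonicPolynomials

section TensorSums

variable {m k : ℕ} {ι : Type*} [Fintype ι] {U V : Set (Evec m)} {f : Evec m → Evec m → ℝ}
  {a e : ι → Evec m → ℝ}

theorem pd1_sum_mul (hU : IsOpen U) (hf : ∀ x ∈ U, ∀ u ∈ V, f x u = ∑ l, a l x * e l u)
    (ha : ∀ l, ∀ x ∈ U, DifferentiableAt ℝ (a l) x) (i : Fin m) :
    ∀ x ∈ U, ∀ u ∈ V, pd1 i f x u = ∑ l, pdv i (a l) x * e l u := by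
  intro x hx u hu
  have heq : (fun y => f y u) =ᶠ[𝓝 x] fun y => ∑ l, a l y * e l u := by
    filter_upwards [hU.mem_nhds hx] with y hy using hf y hy u hu
  have hderiv : HasFDerivAt (fun y => ∑ l, a l y * e l u) (∑ l, e l u • fderiv ℝ (a l) x) x :=
    HasFDerivAt.fun_sum fun l _ => (ha l x hx).hasFDerivAt.mul_const (e l u)
  rw [pd1, heq.fderiv_eq, hderiv.fderiv]
  simp [pdv, mul_comm]

theorem pd2_sum_mul (hV : IsOpen V) (hf : ∀ x ∈ U, ∀ u ∈ V, f x u = ∑ l, a l x * e l u)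
    (he : ∀ l, Differentiable ℝ (e l)) (i : Fin m) :
    ∀ x ∈ U, ∀ u ∈ V, pd2 i f x u = ∑ l, a l x * pdv i (e l) u := by
  intro x hx u hu
  have heq : (fun v => f x v) =ᶠ[𝓝 u] fun v => ∑ l, a l x * e l v := by
    filter_upwards [hV.mem_nhds hu] with v hv using hf x hx v hv
  have hderiv : HasFDerivAt (fun v => ∑ l, a l x * e l v) (∑ l, a l x • fderiv ℝ (e l) u) u :=
    HasFDerivAt.fun_sum fun l _ => (he l u).hasFDerivAt.const_mul (a l x)
  rw [pd2, heq.fderiv_eq, hderiv.fderiv]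
  simp [pdv]

/-- The coefficient of `∂_i ∂_j a (x)` in `𝒟_k (a ⊗ e) (x, u)`. -/
def bosonicCoeff (m k : ℕ) (e : Evec m → ℝ) (u : Evec m) (i j : Fin m) : ℝ :=
  (if i = j then e u else 0) - (4 / ((m : ℝ) + 2 * k - 2)) * (u i * pdv j e u)
    + (4 * ‖u‖ ^ 2 / (((m : ℝ) + 2 * k - 2) * ((m : ℝ) + 2 * k - 4))) * pdv i (pdv j e) u

theorem Dk_eq_sum_bosonicCoeff (hU : IsOpen U) (hV : IsOpen V)
    (hf : ∀ x ∈ U, ∀ u ∈ V, f x u = ∑ l, a l x * e l u)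
    (ha : ∀ l, ∀ x ∈ U, ContDiffAt ℝ 2 (a l) x) (he : ∀ l, ContDiff ℝ ∞ (e l))
    {x u : Evec m} (hx : x ∈ U) (hu : u ∈ V) :
    Dk m k f x u = ∑ s : ι × Fin m × Fin m,
      bosonicCoeff m k (e s.1) u s.2.1 s.2.2 * pdv s.2.1 (pdv s.2.2 (a s.1)) x := by
  have ha₁ (l) (x) (hx : x ∈ U) : DifferentiableAt ℝ (a l) x :=
    (ha l x hx).differentiableAt two_ne_zero
  have ha₂ (j l) (x) (hx : x ∈ U) : DifferentiableAt ℝ (pdv j (a l)) x :=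
    (contDiffAt_pdv (n' := 1) (ha l x hx) one_add_one_eq_two.le j).differentiableAt one_ne_zero
  have he₁ (l) : Differentiable ℝ (e l) := (he l).differentiable (by simp)
  have he₂ (j l) : Differentiable ℝ (pdv j (e l)) :=
    (contDiff_pdv (he l) j).differentiable (by simp)
  have hx₁ (j) := pd1_sum_mul hU hf ha₁ j
  have hxx (i j) := pd1_sum_mul hU (hx₁ j) (ha₂ j) i
  have hux (j) := pd2_sum_mul hV (hx₁ j) he₁ j
  have hxux (i j) := pd1_sum_mul hU (hux j) (ha₂ j) i
  have huxux (i j) := pd2_sum_mul hV (hxux i j) (he₂ j) i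
  simp only [Dk, hxx _ _ x hx u hu, hxux _ _ x hx u hu, huxux _ _ x hx u hu,
    Fintype.sum_prod_type, bosonicCoeff, add_mul, sub_mul, Finset.sum_add_distrib,
    Finset.sum_sub_distrib, ite_mul, zero_mul, Finset.sum_ite_eq, Finset.mem_univ, if_true,
    Finset.mul_sum]
  congr 1
  · congr 1
    · rw [Finset.sum_comm]
      exact Finset.sum_congr rfl fun l _ => Finset.sum_congr rfl fun i _ => mul_comm _ _
    · rw [Finset.sum_comm_cycle]
      exact Finset.sum_congr rfl fun l _ => Finset.sum_congr rfl fun i _ =>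
        Finset.sum_congr rfl fun j _ => by ring
  · rw [Finset.sum_comm_cycle]
    exact Finset.sum_congr rfl fun l _ => Finset.sum_congr rfl fun i _ =>
      Finset.sum_congr rfl fun j _ => by ring

theorem iterate_lapl_sum_mul_eq_zero (hm : ∀ n : ℕ, m + 2 * n ≠ 4) (hU : IsOpen U) (hV : IsOpen V)
    (ha : ∀ l, ContDiff ℝ ∞ (a l)) (he : ∀ l, IsHk m k (e l))
    (hD : ∀ x ∈ U, ∀ u ∈ V, Dk m k (fun x u => ∑ l, a l x * e l u) x u = 0)
    {x u : Evec m} (hx : x ∈ U) (hu : u ∈ V) :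
    lapl^[k + 1] (fun x => ∑ l, a l x * e l u) x = 0 := by
  let g : SmoothFn m := ⟨fun p => ∑ l, a l p.1 * e l p.2, ContDiff.sum fun l _ =>
    ((ha l).comp contDiff_fst).mul ((he l).contDiff.comp contDiff_snd)⟩
  refine SmoothFn.iterate_lapl_eq_zero_of_Dk_eq_zero (g := g) hm hU hV (fun c x u => ?_) hD hx hu
  change ∑ l, a l x * e l (c • u) = c ^ k * ∑ l, a l x * e l u
  rw [Finset.mul_sum]
  exact Finset.sum_congr rfl fun l _ => by rw [(he l).2.1, mul_left_comm]

theorem tendstoUniformlyOn_sum_mul {X Y κ : Type*} {p : Filter κ} {a : κ → ι → X → ℝ}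
    {b : ι → X → ℝ} {e : ι → Y → ℝ} {K : Set X} {L : Set Y}
    (ha : ∀ l, TendstoUniformlyOn (fun n => a n l) (b l) p K)
    (he : ∀ l, ∃ C, ∀ u ∈ L, |e l u| ≤ C) :
    TendstoUniformlyOn (fun n (q : X × Y) => ∑ l, a n l q.1 * e l q.2)
      (fun q => ∑ l, b l q.1 * e l q.2) p (K ×ˢ L) := by
  choose C hC using he
  rw [Metric.tendstoUniformlyOn_iff]
  intro ε hε
  have hS : 0 < 1 + ∑ l, |C l| := by positivity
  filter_upwards [eventually_all.2 fun l =>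
    Metric.tendstoUniformlyOn_iff.1 (ha l) _ (div_pos hε hS)] with n hn
  rintro ⟨x, u⟩ ⟨hx, hu⟩
  calc dist (∑ l, b l x * e l u) (∑ l, a n l x * e l u)
      ≤ ∑ l, dist (b l x) (a n l x) * |e l u| := by
        refine (dist_sum_sum_le _ _ _).trans_eq (Finset.sum_congr rfl fun l _ => ?_)
        rw [Real.dist_eq, ← sub_mul, abs_mul, Real.dist_eq]
    _ ≤ ∑ l, ε / (1 + ∑ l, |C l|) * |C l| := Finset.sum_le_sum fun l _ =>
        mul_le_mul (hn l x hx).le ((hC l u hu).trans (le_abs_self _)) (abs_nonneg _)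
          (div_pos hε hS).le
    _ = ε * (∑ l, |C l|) / (1 + ∑ l, |C l|) := by rw [← Finset.mul_sum, div_mul_eq_mul_div]
    _ < ε := by rw [div_lt_iff₀ hS]; linarith

end TensorSums

section Mollification

variable {E : Type*} [NormedAddCommGroup E]

theorem sum_mul_convolution_apply [MeasurableSpace E] {μ : Measure E} {ι : Type*} [Fintype ι]
    (c : ι → ℝ) {ρ : E → ℝ} {b : ι → E → ℝ} {x : E}
    (h : ∀ s, ConvolutionExistsAt ρ (b s) x (lsmul ℝ ℝ) μ) :
    ∑ s, c s * (ρ ⋆[lsmul ℝ ℝ, μ] b s) x = ∫ t, ρ t * ∑ s, c s * b s (x - t) ∂μ := by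
  simp only [convolution_def, ← integral_const_mul]
  rw [← integral_finsetSum _ fun s _ => (h s).integrable.const_mul (c s)]
  refine integral_congr_ae (Eventually.of_forall fun t => ?_)
  simp only [ContinuousLinearMap.lsmul_apply, smul_eq_mul, Finset.mul_sum, mul_left_comm]

variable [NormedSpace ℝ E]

theorem contDiff_of_forall_mem_tsupport {F : Type*} [NormedAddCommGroup F] [NormedSpace ℝ F]
    {n : WithTop ℕ∞} {f : E → F} (h : ∀ x ∈ tsupport f, ContDiffAt ℝ n f x) : ContDiff ℝ n f := by
  refine contDiff_iff_contDiffAt.2 fun x => ?_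
  by_cases hx : x ∈ tsupport f
  · exact h x hx
  · exact contDiffAt_const.congr_of_eventuallyEq (notMem_tsupport_iff_eventuallyEq.1 hx)

theorem exists_contDiff_hasCompactSupport_eqOn [FiniteDimensional ℝ E] {n : ℕ∞} {K Ω : Set E}
    (hK : IsCompact K) (hΩ : IsOpen Ω) (hKΩ : K ⊆ Ω) {f : E → ℝ}
    (hf : ∀ x ∈ Ω, ContDiffAt ℝ n f x) :
    ∃ g : E → ℝ, ContDiff ℝ n g ∧ HasCompactSupport g ∧ Set.EqOn g f K := by
  have : ProperSpace E := FiniteDimensional.proper_real E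
  obtain ⟨L, hL, hKL, hLΩ⟩ := exists_compact_between hK hΩ hKΩ
  obtain ⟨χ, hχ_one, hχ_zero, -⟩ := exists_contMDiffMap_one_nhds_of_subset_interior
    (n := n) (modelWithCornersSelf ℝ E) hK.isClosed hKL
  have hsupp : tsupport (fun x => χ x * f x) ⊆ L :=
    closure_minimal (fun x hx => by_contra fun h => hx (by simp [hχ_zero x h])) hL.isClosed
  refine ⟨fun x => χ x * f x, contDiff_of_forall_mem_tsupport fun x hx =>
    χ.contMDiff.contDiff.contDiffAt.mul (hf x (hLΩ (hsupp hx))),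
    hL.of_isClosed_subset (isClosed_tsupport _) hsupp, fun x hx => ?_⟩
  simp only [hχ_one.self_of_nhdsSet x hx, one_mul]

theorem tendstoUniformly_normed_convolution [HasContDiffBump E] [FiniteDimensional ℝ E]
    [MeasurableSpace E] [BorelSpace E] {μ : Measure E} [μ.IsAddHaarMeasure] {ι : Type*}
    {p : Filter ι} {ρ : ι → ContDiffBump (0 : E)}
    (hρ : Tendsto (fun i => (ρ i).rOut) p (𝓝 0)) {g : E → ℝ} (hg : UniformContinuous g) :
    TendstoUniformly (fun i => (ρ i).normed μ ⋆[lsmul ℝ ℝ, μ] g) g p := by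
  rw [Metric.tendstoUniformly_iff]
  intro ε hε
  obtain ⟨r, hr, hgr⟩ := Metric.uniformContinuous_iff.1 hg (ε / 2) (half_pos hε)
  filter_upwards [hρ.eventually_lt_const hr] with i hi x
  rw [dist_comm]
  exact (ContDiffBump.dist_normed_convolution_le hg.continuous.aestronglyMeasurable
    fun y hy => (hgr (hy.trans hi)).le).trans_lt (half_lt_self hε)

end Mollification

section Polyharmonicity

variable {m k : ℕ} {Ω K : Set (Evec m)} {f : Evec m → Evec m → ℝ} {ι : Type*} [Fintype ι]

theorem C2Hk.eq_sum (hf : C2Hk m k Ω f) (𝓕 : HkFrame m k ι) {x u : Evec m} (hx : x ∈ Ω)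
    (hu : u ∈ closedBall 0 1) : f x u = ∑ l, f x (𝓕.node l) * 𝓕.dual l u := by
  obtain ⟨q, hq, hfq⟩ := hf.2 x hx
  rw [hfq u hu, 𝓕.expand q hq u]
  exact Finset.sum_congr rfl fun l _ => by rw [hfq _ (ball_subset_closedBall (𝓕.node_mem l))]

theorem C2Hk.contDiffAt_slice (hΩ : IsOpen Ω) (hf : C2Hk m k Ω f) {x u : Evec m} (hx : x ∈ Ω)
    (hu : u ∈ ball 0 1) : ContDiffAt ℝ 2 (fun x => f x u) x := by
  have hprod := hf.1.contDiffAt ((hΩ.prod isOpen_ball).mem_nhds (Set.mk_mem_prod hx hu))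
  exact hprod.comp x (contDiffAt_id.prodMk contDiffAt_const)

theorem sum_bosonicCoeff_convolution_eq_zero {U : Set (Evec m)} {a e : ι → Evec m → ℝ}
    (ha : ∀ l, ContDiff ℝ 2 (a l)) (hc : ∀ l, HasCompactSupport (a l)) {u : Evec m}
    (hD : ∀ x ∈ U, ∑ s : ι × Fin m × Fin m,
      bosonicCoeff m k (e s.1) u s.2.1 s.2.2 * pdv s.2.1 (pdv s.2.2 (a s.1)) x = 0)
    {ρ : Evec m → ℝ} (hρ : LocallyIntegrable ρ) {x : Evec m} (hx : ∀ t, ρ t ≠ 0 → x - t ∈ U) :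
    ∑ s : ι × Fin m × Fin m, bosonicCoeff m k (e s.1) u s.2.1 s.2.2 *
      pdv s.2.1 (pdv s.2.2 (ρ ⋆[lsmul ℝ ℝ] a s.1)) x = 0 := by
  have ha₁ (j l) : ContDiff ℝ 1 (pdv j (a l)) := contDiff_iff_contDiffAt.2 fun x =>
    contDiffAt_pdv (ha l).contDiffAt one_add_one_eq_two.le j
  have ha₂ (i j l) : ContDiff ℝ 0 (pdv i (pdv j (a l))) := contDiff_iff_contDiffAt.2 fun x =>
    contDiffAt_pdv (ha₁ j l).contDiffAt (zero_add _).le i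
  have hc₁ (j l) : HasCompactSupport (pdv j (a l)) := hasCompactSupport_pdv (hc l) j
  simp only [fun j l => pdv_convolution hρ (hc l) ((ha l).of_le one_le_two) j,
    fun i j l => pdv_convolution hρ (hc₁ j l) (ha₁ j l) i]
  rw [sum_mul_convolution_apply
    (fun s : ι × Fin m × Fin m => bosonicCoeff m k (e s.1) u s.2.1 s.2.2)
    (b := fun s => pdv s.2.1 (pdv s.2.2 (a s.1))) fun s =>
    (hasCompactSupport_pdv (hc₁ s.2.2 s.1) s.2.1).convolutionExists_right _ hρ
      (ha₂ _ _ _).continuous x]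
  refine integral_eq_zero_of_ae (Eventually.of_forall fun t => ?_)
  by_cases ht : ρ t = 0
  · simp only [ht, zero_mul, Pi.zero_apply]
  · simp only [hD _ (hx t ht), mul_zero, Pi.zero_apply]

theorem Dk_sum_normed_convolution_mul_eq_zero {U V W : Set (Evec m)} {a e : ι → Evec m → ℝ}
    (ha : ∀ l, ContDiff ℝ 2 (a l)) (hc : ∀ l, HasCompactSupport (a l))
    (he : ∀ l, ContDiff ℝ ∞ (e l)) (hV : IsOpen V) (hW : IsOpen W)
    (hD : ∀ x ∈ U, ∀ u ∈ V, ∑ s : ι × Fin m × Fin m,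
      bosonicCoeff m k (e s.1) u s.2.1 s.2.2 * pdv s.2.1 (pdv s.2.2 (a s.1)) x = 0)
    (ρ : ContDiffBump (0 : Evec m)) (hWU : thickening ρ.rOut W ⊆ U) :
    ∀ x ∈ W, ∀ u ∈ V,
      Dk m k (fun x u => ∑ l, (ρ.normed volume ⋆[lsmul ℝ ℝ] a l) x * e l u) x u = 0 := by
  intro x hx u hu
  have hsmooth (l) : ContDiff ℝ 2 (ρ.normed volume ⋆[lsmul ℝ ℝ] a l) :=
    ρ.hasCompactSupport_normed.contDiff_convolution_left (n := 2) _ ρ.contDiff_normed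
      (ha l).continuous.locallyIntegrable
  rw [Dk_eq_sum_bosonicCoeff hW hV (fun _ _ _ _ => rfl) (fun l _ _ => (hsmooth l).contDiffAt)
    he hx hu]
  refine sum_bosonicCoeff_convolution_eq_zero ha hc (fun y hy => hD y hy u hu)
    (ρ.contDiff_normed (n := 0)).continuous.locallyIntegrable
    fun t ht => hWU (mem_thickening_iff.2 ⟨x, hx, ?_⟩)
  rw [dist_eq_norm, sub_sub_cancel_left, norm_neg]
  exact mem_ball_zero_iff.1 (ρ.support_normed_eq (μ := volume) ▸ ht)

/-- `f ∈ C²(Ω×𝔹^m, ℋ_k)` with `𝒟_k f = 0` in `Ω × 𝔹^m`. -/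
structure IsNullSolution (m k : ℕ) (Ω : Set (Evec m)) (f : Evec m → Evec m → ℝ) : Prop where
  c2Hk : C2Hk m k Ω f
  Dk_eq_zero : ∀ x ∈ Ω, ∀ u ∈ ball (0 : Evec m) 1, Dk m k f x u = 0

namespace IsNullSolution

theorem exists_compactly_supported_coeff (hΩ : IsOpen Ω) (hf : IsNullSolution m k Ω f)
    (hK : IsCompact K) (hKΩ : K ⊆ Ω) (𝓕 : HkFrame m k ι) :
    ∃ a : ι → Evec m → ℝ, (∀ l, ContDiff ℝ 2 (a l)) ∧ (∀ l, HasCompactSupport (a l)) ∧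
      (∀ x ∈ K, ∀ u ∈ ball 0 1, f x u = ∑ l, a l x * 𝓕.dual l u) ∧
      ∀ x ∈ interior K, ∀ u ∈ ball 0 1, ∑ s : ι × Fin m × Fin m,
        bosonicCoeff m k (𝓕.dual s.1) u s.2.1 s.2.2 * pdv s.2.1 (pdv s.2.2 (a s.1)) x = 0 := by
  choose a ha hc haf using fun l => exists_contDiff_hasCompactSupport_eqOn (n := 2) hK hΩ hKΩ
    fun x hx => hf.c2Hk.contDiffAt_slice hΩ hx (𝓕.node_mem l)
  have hsum : ∀ x ∈ K, ∀ u ∈ ball 0 1, f x u = ∑ l, a l x * 𝓕.dual l u := fun x hx u hu => by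
    simp only [hf.c2Hk.eq_sum 𝓕 (hKΩ hx) (ball_subset_closedBall hu), fun l => haf l hx]
  refine ⟨a, ha, hc, hsum, fun x hx u hu => ?_⟩
  rw [← hf.Dk_eq_zero x (hKΩ (interior_subset hx)) u hu]
  exact (Dk_eq_sum_bosonicCoeff isOpen_interior isOpen_ball
    (fun x hx => hsum x (interior_subset hx)) (fun l x _ => (ha l).contDiffAt)
    (fun l => (𝓕.isHk_dual l).contDiff) hx hu).symm

theorem exists_polyharmonic_approx (hm : ∀ n : ℕ, m + 2 * n ≠ 4) (hΩ : IsOpen Ω)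
    (hf : IsNullSolution m k Ω f) (hK : IsCompact K) (hKΩ : K ⊆ Ω) {u : Evec m}
    (hu : u ∈ ball 0 1) :
    ∃ G : ℕ → Evec m → ℝ, (∀ n, ContDiff ℝ ∞ (G n)) ∧
      (∀ n, ∀ x ∈ K, lapl^[k + 1] (G n) x = 0) ∧
      TendstoUniformlyOn G (fun x => f x u) atTop K := by
  obtain ⟨S, ⟨𝓕⟩⟩ := exists_hkFrame m k
  obtain ⟨δ, hδ, hδΩ⟩ := hK.exists_cthickening_subset_open hΩ hKΩ
  obtain ⟨a, ha, hc, hfa, hDa⟩ :=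
    hf.exists_compactly_supported_coeff hΩ hK.cthickening hδΩ 𝓕
  let ρ (n : ℕ) : ContDiffBump (0 : Evec m) :=
    ⟨δ / 2 / (n + 2), δ / 2 / (n + 1), by positivity, by gcongr; norm_num⟩
  have hρ : Tendsto (fun n => (ρ n).rOut) atTop (𝓝 0) :=
    tendsto_const_nhds.div_atTop (tendsto_natCast_atTop_atTop.atTop_add tendsto_const_nhds)
  let b (n : ℕ) (l : S) : Evec m → ℝ := (ρ n).normed volume ⋆[lsmul ℝ ℝ] a l
  have hb (n l) : ContDiff ℝ ∞ (b n l) :=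
    (ρ n).hasCompactSupport_normed.contDiff_convolution_left _ (ρ n).contDiff_normed
      (ha l).continuous.locallyIntegrable
  have hDb (n) : ∀ x ∈ thickening (δ / 2) K, ∀ u ∈ ball (0 : Evec m) 1,
      Dk m k (fun x u => ∑ l, b n l x * 𝓕.dual l u) x u = 0 := by
    refine Dk_sum_normed_convolution_mul_eq_zero ha hc (fun l => (𝓕.isHk_dual l).contDiff)
      isOpen_ball isOpen_thickening hDa (ρ n) ?_
    have hρδ : (ρ n).rOut ≤ δ / 2 := div_le_self (half_pos hδ).le (by simp)
    exact (thickening_thickening_subset _ _ _).trans <|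
      (thickening_mono (by linarith) K).trans (thickening_subset_interior_cthickening δ K)
  refine ⟨fun n x => ∑ l, b n l x * 𝓕.dual l u, fun n => ContDiff.sum fun l _ =>
    (hb n l).mul contDiff_const, fun n x hx => iterate_lapl_sum_mul_eq_zero hm isOpen_thickening
      isOpen_ball (hb n) 𝓕.isHk_dual (hDb n) (self_subset_thickening (half_pos hδ) K hx) hu, ?_⟩
  have hba (l : S) : TendstoUniformlyOn (fun n => b n l) (a l) atTop K :=
    (tendstoUniformly_normed_convolution hρ ((hc l).uniformContinuous_of_continuous
      (ha l).continuous)).tendstoUniformlyOn.mono (Set.subset_univ K)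
  have hprod := tendstoUniformlyOn_sum_mul (e := 𝓕.dual) (L := {u}) hba
    fun l => ⟨|𝓕.dual l u|, by simp⟩
  exact ((hprod.comp fun x => (x, u)).mono fun x hx => ⟨hx, rfl⟩).congr_right
    fun x hx => (hfa x (self_subset_cthickening K hx) u hu).symm

end IsNullSolution

theorem exists_localKernel_of_polyharmonic {x₀ : Evec m} (hΩ : Ω ∈ 𝓝 x₀) (n : ℕ) :
    ∃ 𝒦 : LocalKernel Ω x₀, ∀ G, ContDiff ℝ ∞ G → (∀ y ∈ 𝒦.dom, lapl^[n] G y = 0) →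
      𝒦.Reproduces volume G := by
  obtain ⟨r, hr, hrΩ⟩ := nhds_basis_closedBall.mem_iff.1 hΩ
  obtain ⟨κ, hκ, hsupp, hrep⟩ := exists_polyharmonic_kernel m n (half_pos hr)
  refine ⟨
    { nhd := ball x₀ (r / 2)
      dom := closedBall x₀ r
      ker := κ
      isOpen_nhd := isOpen_ball
      mem_nhd := mem_ball_self (half_pos hr)
      nhd_subset_dom := ball_subset_closedBall.trans (closedBall_subset_closedBall (by linarith))
      isCompact_dom := isCompact_closedBall x₀ r
      dom_subset := hrΩ
      contDiff_ker := hκ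
      hasCompactSupport_ker := HasCompactSupport.of_support_subset_isCompact
        (isCompact_closedBall 0 (r / 2)) (hsupp.trans ball_subset_closedBall) },
    fun G hG hpoly => ⟨hG.continuous.continuousOn, fun x hx => ?_⟩⟩
  have hdist : dist x x₀ < r / 2 := hx
  rw [LocalKernel.conv_apply, hrep G x hG fun y hy =>
      hpoly y (closedBall_subset_closedBall' (by linarith) hy),
    setIntegral_eq_integral_of_forall_compl_eq_zero]
  intro z hz
  refine mul_eq_zero_of_right _ (Function.notMem_support.1 fun h => hz ?_)
  have hzx : dist z x < r / 2 := by
    rw [dist_comm, dist_eq_norm]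
    exact mem_ball_zero_iff.1 (hsupp h)
  exact (dist_triangle z x x₀).trans (by linarith)

theorem locallyReproduced_slice (hm : ∀ n : ℕ, m + 2 * n ≠ 4) (hΩ : IsOpen Ω) {κ : Type*}
    {f : κ → Evec m → Evec m → ℝ} (hf : ∀ i, IsNullSolution m k Ω (f i)) {u : κ → Evec m}
    (hu : ∀ i, u i ∈ ball 0 1) : LocallyReproduced volume Ω fun i x => f i x (u i) := by
  intro x₀ hx₀
  obtain ⟨𝒦, h𝒦⟩ := exists_localKernel_of_polyharmonic (hΩ.mem_nhds hx₀) (k + 1)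
  refine ⟨𝒦, fun i => ?_⟩
  obtain ⟨G, hG, hpoly, hlim⟩ :=
    (hf i).exists_polyharmonic_approx hm hΩ 𝒦.isCompact_dom 𝒦.dom_subset (hu i)
  exact .of_tendstoUniformlyOn (fun n => h𝒦 (G n) (hG n) (hpoly n)) hlim

end Polyharmonicity

section DerivativesOfSums

variable {m : ℕ} {U V : Set (Evec m)}

theorem exists_list_Dx_eq_foldr (α : Fin m → ℕ) : ∃ L : List (Fin m),
    ∀ f : Evec m → Evec m → ℝ, Dx α f = fun x u => L.foldr pdv (fun y => f y u) x := by
  suffices h : ∀ s : List (Fin m), ∃ L : List (Fin m), ∀ f : Evec m → Evec m → ℝ,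
      s.foldr (fun i g => (pd1 i)^[α i] g) f = fun x u => L.foldr pdv (fun y => f y u) x from
    h (List.finRange m)
  intro s
  induction s with
  | nil => exact ⟨[], fun f => rfl⟩
  | cons i s ih =>
    obtain ⟨L, hL⟩ := ih
    refine ⟨List.replicate (α i) i ++ L, fun f => ?_⟩
    rw [List.foldr_cons, hL f]
    induction α i with
    | zero => rfl
    | succ n ihn =>
      rw [Function.iterate_succ_apply', ihn]
      rfl

theorem foldr_pdv_sum_mul {ι : Type*} [Fintype ι] (hU : IsOpen U) {a : ι → Evec m → ℝ}
    (ha : ∀ l, ∀ x ∈ U, ContDiffAt ℝ ∞ (a l) x) {f : Evec m → ℝ} {c : ι → ℝ}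
    (hf : ∀ x ∈ U, f x = ∑ l, a l x * c l) (L : List (Fin m)) :
    ∀ x ∈ U, L.foldr pdv f x = ∑ l, L.foldr pdv (a l) x * c l := by
  induction L with
  | nil => exact hf
  | cons i L ih =>
    exact fun x hx => pd1_sum_mul (V := Set.univ) (f := fun x _ => L.foldr pdv f x)
      (e := fun l _ => c l) hU (fun x hx _ _ => ih x hx)
      (fun l x hx => (contDiffAt_foldr_pdv (ha l x hx) L).differentiableAt (by simp)) i x hx
      0 trivial

end DerivativesOfSums

section SliceBounds

variable {m k : ℕ} {Ω K : Set (Evec m)}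

theorem C2Hk.continuousOn_slice {f : Evec m → Evec m → ℝ} (hΩ : IsOpen Ω) (hf : C2Hk m k Ω f)
    {u : Evec m} (hu : u ∈ ball 0 1) : ContinuousOn (fun x => f x u) Ω := fun _ hx =>
  (hf.contDiffAt_slice hΩ hx hu).continuousAt.continuousWithinAt

theorem C2Hk.continuousOn_integral_abs {f : Evec m → Evec m → ℝ} (hΩ : IsOpen Ω)
    (hf : C2Hk m k Ω f) : ContinuousOn (fun x => ∫ v in ball (0 : Evec m) 1, |f x v|) Ω := by
  obtain ⟨S, ⟨𝓕⟩⟩ := exists_hkFrame m k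
  have hdual (l) : Continuous (𝓕.dual l) := (𝓕.isHk_dual l).contDiff.continuous
  have hcont : Continuous fun c : S → ℝ =>
      ∫ v in closedBall (0 : Evec m) 1, |∑ l, c l * 𝓕.dual l v| :=
    continuous_parametric_integral_of_continuous
      (f := fun (c : S → ℝ) v => |∑ l, c l * 𝓕.dual l v|)
      (by simp only [Function.uncurry_def]; fun_prop) (isCompact_closedBall _ _)
  have hslice : ContinuousOn (fun x l => f x (𝓕.node l)) Ω :=
    continuousOn_pi.2 fun l => hf.continuousOn_slice hΩ (𝓕.node_mem l)
  refine (hcont.comp_continuousOn hslice).congr fun x hx => ?_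
  have hae : ball (0 : Evec m) 1 =ᵐ[volume] closedBall (0 : Evec m) 1 :=
    ae_eq_of_subset_of_measure_ge ball_subset_closedBall
      (by rw [Measure.addHaar_unitClosedBall_eq_addHaar_unitBall])
      measurableSet_ball.nullMeasurableSet measure_closedBall_lt_top.ne
  simp only [setIntegral_congr_set hae]
  refine setIntegral_congr_fun isClosed_closedBall.measurableSet fun v hv => ?_
  simp only [hf.eq_sum 𝓕 hx hv]

theorem exists_integral_abs_slice_le (hΩ : IsOpen Ω) (hK : IsCompact K) (hKΩ : K ⊆ Ω)
    {κ : Type*} {f : κ → Evec m → Evec m → ℝ} (hf : ∀ i, C2Hk m k Ω (f i)) {u : Evec m}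
    (hu : u ∈ ball 0 1)
    (hbdd : ∃ C : ℝ, ∀ i, ∫ x in K, ∫ v in ball (0 : Evec m) 1, |f i x v| ≤ C) :
    ∃ C : ℝ, ∀ i, ∫ x in K, |f i x u| ≤ C := by
  obtain ⟨C, hC⟩ := hbdd
  obtain ⟨D, hD⟩ := IsHk.exists_abs_le_mul_integral k hu
  refine ⟨|D| * C, fun i => ?_⟩
  calc ∫ x in K, |f i x u|
      ≤ ∫ x in K, |D| * ∫ v in ball (0 : Evec m) 1, |f i x v| := by
        refine setIntegral_mono_on
          (((hf i).continuousOn_slice hΩ hu).mono hKΩ |>.abs.integrableOn_compact hK)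
          (((hf i).continuousOn_integral_abs hΩ).mono hKΩ |>.integrableOn_compact hK |>.const_mul _)
          hK.measurableSet fun x hx => ?_
        obtain ⟨q, hq, hfq⟩ := (hf i).2 x (hKΩ hx)
        rw [hfq _ (ball_subset_closedBall hu), setIntegral_congr_fun measurableSet_ball
          (g := fun v => |q v|) fun v hv => congrArg abs (hfq v (ball_subset_closedBall hv))]
        exact (hD q hq).trans (mul_le_mul_of_nonneg_right (le_abs_self D)
          (integral_nonneg fun v => abs_nonneg _))
    _ = |D| * ∫ x in K, ∫ v in ball (0 : Evec m) 1, |f i x v| := integral_const_mul _ _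
    _ ≤ |D| * C := mul_le_mul_of_nonneg_left (hC i) (abs_nonneg D)

end SliceBounds

section Limits

variable {m k : ℕ} {Ω : Set (Evec m)} {ι : Type*} [Fintype ι]

theorem c2Hk_sum_mul {a e : ι → Evec m → ℝ} (ha : ∀ l, ∀ x ∈ Ω, ContDiffAt ℝ 2 (a l) x)
    (he : ∀ l, IsHk m k (e l)) : C2Hk m k Ω fun x u => ∑ l, a l x * e l u := by
  refine ⟨ContDiffOn.sum fun l _ => ContDiffOn.mul (fun q hq => ?_) ?_, fun x _ =>
    ⟨∑ l, a l x • e l, (hkSpace m k).sum_mem fun l _ => (hkSpace m k).smul_mem _ (he l),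
      fun u _ => by simp only [Finset.sum_apply, Pi.smul_apply, smul_eq_mul]⟩⟩
  · exact ((ha l q.1 hq.1).comp q contDiffAt_fst).contDiffWithinAt
  · exact (((he l).contDiff.of_le ENat.LEInfty.out).comp contDiff_snd).contDiffOn

variable {κ : Type*} {p : Filter κ} [p.NeBot] {F : κ → Evec m → Evec m → ℝ}
  {b : ι → Evec m → ℝ}

theorem IsNullSolution.of_tendstoLocallyUniformlyOn (hm : ∀ n : ℕ, m + 2 * n ≠ 4)
    (hΩ : IsOpen Ω) (hF : ∀ n, IsNullSolution m k Ω (F n)) (𝓕 : HkFrame m k ι)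
    (hb : ∀ l, TendstoLocallyUniformlyOn (fun n x => F n x (𝓕.node l)) (b l) p Ω) :
    IsNullSolution m k Ω fun x u => ∑ l, b l x * 𝓕.dual l u := by
  have hrep (l) := locallyReproduced_slice hm hΩ hF fun _ => 𝓕.node_mem l
  have hb₂ (l) (x) (hx : x ∈ Ω) : ContDiffAt ℝ 2 (b l) x :=
    ((hrep l).contDiffAt_of_tendstoLocallyUniformlyOn hΩ (hb l) hx).of_le ENat.LEInfty.out
  have hdual (l) : ContDiff ℝ ∞ (𝓕.dual l) := (𝓕.isHk_dual l).contDiff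
  refine ⟨c2Hk_sum_mul hb₂ 𝓕.isHk_dual, fun x hx u hu => ?_⟩
  have hDkF (n) : Dk m k (F n) x u = ∑ s : ι × Fin m × Fin m,
      bosonicCoeff m k (𝓕.dual s.1) u s.2.1 s.2.2 *
        pdv s.2.1 (pdv s.2.2 fun x => F n x (𝓕.node s.1)) x :=
    Dk_eq_sum_bosonicCoeff (a := fun l x => F n x (𝓕.node l)) (e := 𝓕.dual) hΩ isOpen_ball
      (fun x hx u hu => (hF n).c2Hk.eq_sum 𝓕 hx (ball_subset_closedBall hu))
      (fun l x hx => (hF n).c2Hk.contDiffAt_slice hΩ hx (𝓕.node_mem l)) hdual hx hu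
  have hDk : Tendsto (fun n => Dk m k (F n) x u) p
      (𝓝 (Dk m k (fun x u => ∑ l, b l x * 𝓕.dual l u) x u)) := by
    rw [Dk_eq_sum_bosonicCoeff (a := b) (e := 𝓕.dual) hΩ isOpen_ball (fun _ _ _ _ => rfl) hb₂
      hdual hx hu]
    simp only [hDkF]
    exact tendsto_finsetSum _ fun s _ => (((hrep s.1).tendstoLocallyUniformlyOn_foldr_pdv hΩ
      (hb s.1) [s.2.1, s.2.2]).tendsto_at hx).const_mul
      (bosonicCoeff m k (𝓕.dual s.1) u s.2.1 s.2.2)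
  simp only [fun n => (hF n).Dk_eq_zero x hx u hu] at hDk
  exact tendsto_nhds_unique hDk tendsto_const_nhds

theorem IsNullSolution.tendstoUniformlyOn_Dx (hm : ∀ n : ℕ, m + 2 * n ≠ 4) (hΩ : IsOpen Ω)
    (hF : ∀ n, IsNullSolution m k Ω (F n)) (𝓕 : HkFrame m k ι)
    (hb : ∀ l, TendstoLocallyUniformlyOn (fun n x => F n x (𝓕.node l)) (b l) p Ω)
    (α : Fin m → ℕ) {K₁ K₂ : Set (Evec m)} (hK₁ : IsCompact K₁) (hK₁Ω : K₁ ⊆ Ω)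
    (hK₂ : IsCompact K₂) (hK₂B : K₂ ⊆ ball 0 1) :
    TendstoUniformlyOn (fun n (q : Evec m × Evec m) => Dx α (F n) q.1 q.2)
      (fun q => Dx α (fun x u => ∑ l, b l x * 𝓕.dual l u) q.1 q.2) p (K₁ ×ˢ K₂) := by
  have hrep (l) := locallyReproduced_slice hm hΩ hF fun _ => 𝓕.node_mem l
  obtain ⟨L, hL⟩ := exists_list_Dx_eq_foldr α
  have hlim := tendstoUniformlyOn_sum_mul
    (fun l => (tendstoLocallyUniformlyOn_iff_forall_isCompact hΩ).1
      ((hrep l).tendstoLocallyUniformlyOn_foldr_pdv hΩ (hb l) L) K₁ hK₁Ω hK₁)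
    fun l => hK₂.exists_bound_of_continuousOn (𝓕.isHk_dual l).contDiff.continuous.continuousOn
  simp only [hL]
  refine (hlim.congr (Eventually.of_forall fun n q hq => ?_)).congr_right fun q hq => ?_
  · exact (foldr_pdv_sum_mul hΩ (fun l x hx => (hrep l).contDiffAt n hx) (fun x hx =>
      (hF n).c2Hk.eq_sum 𝓕 hx (ball_subset_closedBall (hK₂B hq.2))) L q.1 (hK₁Ω hq.1)).symm
  · exact (foldr_pdv_sum_mul hΩ (fun l x hx =>
      (hrep l).contDiffAt_of_tendstoLocallyUniformlyOn hΩ (hb l) hx) (c := fun l => 𝓕.dual l q.2)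
      (fun _ _ => rfl) L q.1 (hK₁Ω hq.1)).symm

end Limits

theorem stmt_19_general (m k : ℕ) (hm : ∀ n : ℕ, m + 2 * n ≠ 4)
    (Ω : Set (Evec m)) (hΩ : IsOpen Ω)
    (F : ℕ → Evec m → Evec m → ℝ)
    (hreg : ∀ j, C2Hk m k Ω (F j))
    (hD : ∀ j, ∀ x ∈ Ω, ∀ ν ∈ ball (0 : Evec m) 1, Dk m k (F j) x ν = 0)
    (hbdd : ∀ K : Set (Evec m), IsCompact K → K ⊆ Ω →
      ∃ C : ℝ, ∀ j, (∫ x in K, ∫ ν in ball (0 : Evec m) 1, |F j x ν|) ≤ C) :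
    ∃ φ : ℕ → ℕ, StrictMono φ ∧
      ∃ f : Evec m → Evec m → ℝ, C2Hk m k Ω f ∧
        (∀ x ∈ Ω, ∀ ν ∈ ball (0 : Evec m) 1, Dk m k f x ν = 0) ∧
        ∀ (α : Fin m → ℕ) (K₁ K₂ : Set (Evec m)),
          IsCompact K₁ → K₁ ⊆ Ω → IsCompact K₂ → K₂ ⊆ ball (0 : Evec m) 1 →
          TendstoUniformlyOn (fun n (q : Evec m × Evec m) => Dx α (F (φ n)) q.1 q.2)
            (fun q : Evec m × Evec m => Dx α f q.1 q.2) atTop (K₁ ×ˢ K₂) := by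
  have hF (j) : IsNullSolution m k Ω (F j) := ⟨hreg j, hD j⟩
  obtain ⟨S, ⟨𝓕⟩⟩ := exists_hkFrame m k
  obtain ⟨φ, hφ, b, hb⟩ := LocallyReproduced.exists_subseq_tendstoLocallyUniformlyOn hΩ
    (a := fun j (l : S) x => F j x (𝓕.node l))
    (fun l => locallyReproduced_slice hm hΩ hF fun _ => 𝓕.node_mem l)
    fun l K hK hKΩ =>
      exists_integral_abs_slice_le hΩ hK hKΩ hreg (𝓕.node_mem l) (hbdd K hK hKΩ)
  have hlim := IsNullSolution.of_tendstoLocallyUniformlyOn hm hΩ (fun n => hF (φ n)) 𝓕 hb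
  exact ⟨φ, hφ, _, hlim.c2Hk, hlim.Dk_eq_zero, fun α K₁ K₂ hK₁ hK₁Ω hK₂ hK₂B =>
    IsNullSolution.tendstoUniformlyOn_Dx hm hΩ (fun n => hF (φ n)) 𝓕 hb α hK₁ hK₁Ω hK₂ hK₂B⟩

/-- normal-families/compactness property for null solutions of the
bosonic Laplacian, `m > 4`. -/
theorem stmt_19 (m k : ℕ) (hm : 4 < m) (hk : 1 ≤ k)
    (Ω : Set (Evec m)) (hΩ : IsOpen Ω)
    (F : ℕ → Evec m → Evec m → ℝ)
    (hreg : ∀ j, C2Hk m k Ω (F j))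
    (hD : ∀ j, ∀ x ∈ Ω, ∀ ν ∈ ball (0 : Evec m) 1, Dk m k (F j) x ν = 0)
    (hbdd : ∀ K : Set (Evec m), IsCompact K → K ⊆ Ω →
      ∃ C : ℝ, ∀ j, (∫ x in K, ∫ ν in ball (0 : Evec m) 1, |F j x ν|) ≤ C) :
    ∃ φ : ℕ → ℕ, StrictMono φ ∧
      ∃ f : Evec m → Evec m → ℝ, C2Hk m k Ω f ∧
        (∀ x ∈ Ω, ∀ ν ∈ ball (0 : Evec m) 1, Dk m k f x ν = 0) ∧
        ∀ (α : Fin m → ℕ) (K₁ K₂ : Set (Evec m)),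
          IsCompact K₁ → K₁ ⊆ Ω → IsCompact K₂ → K₂ ⊆ ball (0 : Evec m) 1 →
          TendstoUniformlyOn (fun n (q : Evec m × Evec m) => Dx α (F (φ n)) q.1 q.2)
            (fun q : Evec m × Evec m => Dx α f q.1 q.2) atTop (K₁ ×ˢ K₂) :=
  stmt_19_general m k (fun n => by omega) Ω hΩ F hreg hD hbdd
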